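/- (Estimates for the resonant limit operators.) Let A, B ∈ (Ker L)^⊥ and let u be a divergence-free vector field on 𝕋_b^d. Then: (i) for σ, γ ≥ 0, ‖𝒬₁(u,A)‖_{H^{σ−1}} ≲ ‖A‖_{H^{σ+γ}} ‖|k|^{−γ}ℱu̲‖_{ℓ¹(Z̃^d)} + |û₀| ‖A‖_{H^σ}; (ii) for 1/2 < σ < 3/2, ‖𝒬₂(A,B)‖_{H^{σ−2}} ≲ min{ ‖A‖_{B^{1/2}_{2,1}} ‖B‖_{B^{σ−1}_{2,1}}, ‖B‖_{B^{1/2}_{2,1}} ‖A‖_{B^{σ−1}_{2,1}} }; (iii) for σ ≥ 3/2, ‖𝒬₂(A,B)‖_{H^{σ−2}} ≲ ‖A‖_{B^{σ−1}_{2,1}} ‖B‖_{B^{σ−1}_{2,1}}; (iv) for σ > −1/2, ‖𝒬₂(A,A)‖_{B^{σ−1}_{2,1}} ≲ ‖A‖_{B^{1/2}_{2,1}} ‖A‖_{B^{σ}_{2,1}}. -/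

import Mathlib

open MeasureTheory Filter Set
open scoped ENNReal Topology

noncomputable section

namespace LowMach

attribute [local instance 10] Classical.propDecidable

/-- Frequency lattice of the torus `𝕋_b^d` (indices of Fourier modes). -/
abbrev Lat (d : ℕ) := Fin d → ℤ
/-- A scalar periodic distribution, represented by its Fourier coefficients. -/
abbrev SF (d : ℕ) := Lat d → ℂ
/-- A vector-field periodic distribution, represented by its Fourier coefficients. -/
abbrev VF (d : ℕ) := Lat d → Fin d → ℂ
/-- A `(d+1)`-component field `(a, u)`. -/
abbrev PairF (d : ℕ) := SF d × VF d

variable {d : ℕ} {E : Type*}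

/-- `|𝕋_b^d| = ∏ 2π b_h`. -/
def vol (b : Fin d → ℝ) : ℝ := ∏ h, (2 * Real.pi * b h)

/-- the real frequency `k_i/b_i` attached to the lattice point `k`. -/
def freq (b : Fin d → ℝ) (k : Lat d) (i : Fin d) : ℝ := (k i : ℝ) / b i

/-- `|k|`, the euclidean norm of the frequency. -/
def freqNorm (b : Fin d → ℝ) (k : Lat d) : ℝ := Real.sqrt (∑ i, (freq b k i) ^ 2)

/-- generalized sign: `1` iff the first nonzero component of `k` is positive. -/
def sg (k : Lat d) : ℝ := if ∃ i, 0 < k i ∧ ∀ j, j < i → k j = 0 then 1 else -1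

/-- `ℓ^r` norm (`r ∈ [1,∞]`) of an `ℝ≥0∞`-valued family. -/
def lr {α : Type*} (r : ℝ≥0∞) (f : α → ℝ≥0∞) : ℝ≥0∞ :=
  if r = ∞ then ⨆ a, f a else (∑' a, f a ^ r.toReal) ^ (1 / r.toReal)

/-- The time interval `(0,T)` (`T ∈ (0,∞]`). -/
def timeSet (T : ℝ≥0∞) : Set ℝ := {t : ℝ | 0 < t ∧ ENNReal.ofReal t < T}
/-- The time interval `[0,T]` (`= [0,∞)` if `T = ∞`). -/
def ctimeSet (T : ℝ≥0∞) : Set ℝ := {t : ℝ | 0 ≤ t ∧ ENNReal.ofReal t ≤ T}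

/-- `L^q(0,T)` norm of an `ℝ≥0∞`-valued function of time. -/
def timeLq (q T : ℝ≥0∞) (F : ℝ → ℝ≥0∞) : ℝ≥0∞ :=
  if q = ∞ then essSup F (volume.restrict (timeSet T))
  else (∫⁻ t in timeSet T, F t ^ q.toReal) ^ (1 / q.toReal)

/-- exponential on `ℝ≥0∞`. -/
def eexp (x : ℝ≥0∞) : ℝ≥0∞ := if x = ∞ then ∞ else ENNReal.ofReal (Real.exp x.toReal)

/-- The hypotheses on the fixed Littlewood–Paley bump function `φ`. -/
def GoodBump (φ : ℝ → ℝ) : Prop :=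
  ContDiff ℝ (⊤ : ℕ∞) φ ∧ (∀ ξ, 0 ≤ φ ξ) ∧
  (∀ ξ, φ ξ ≠ 0 → 3/4 ≤ |ξ| ∧ |ξ| ≤ 8/3) ∧
  (∀ ξ : ℝ, ξ ≠ 0 → HasSum (fun j : ℤ => φ ((2:ℝ) ^ (-j) * ξ)) 1)

section ENorms
variable [NormedAddCommGroup E] [NormedSpace ℝ E]

/-- the weight `φ(2^{-j}|k|)` of the `j`-th dyadic block. -/
def blockW (φ : ℝ → ℝ) (b : Fin d → ℝ) (j : ℤ) (k : Lat d) : ℝ :=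
  φ ((2:ℝ) ^ (-j) * freqNorm b k)

/-- the dyadic block `Δ_j` acting on Fourier coefficients. -/
def blockOp (φ : ℝ → ℝ) (b : Fin d → ℝ) (j : ℤ) (c : Lat d → E) : Lat d → E :=
  fun k => blockW φ b j k • c k

/-- the multiplier of the low-frequency cut-off `S_j` at `k ≠ 0`. -/
def SW (φ : ℝ → ℝ) (b : Fin d → ℝ) (j : ℤ) (k : Lat d) : ℝ :=
  ∑' j' : ℤ, if j' < j then blockW φ b j' k else 0

/-- the low-frequency cut-off `S_j g = ĝ₀/√|𝕋| + ∑_{j'≤j-1} Δ_{j'} g`. -/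
def SOp (φ : ℝ → ℝ) (b : Fin d → ℝ) (j : ℤ) (c : Lat d → E) : Lat d → E :=
  fun k => (if k = 0 then (1:ℝ) else SW φ b j k) • c k

/-- `L²(𝕋_b^d)` norm, via Parseval. -/
def eL2 (c : Lat d → E) : ℝ≥0∞ := (∑' k, (‖c k‖₊ : ℝ≥0∞) ^ 2) ^ (1/2 : ℝ)

/-- `‖ℱg‖_{ℓ¹}`. -/
def l1F (c : Lat d → E) : ℝ≥0∞ := ∑' k, (‖c k‖₊ : ℝ≥0∞)

/-- the mean-zero (underlined) part of a periodic distribution. -/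
def ul (c : Lat d → E) : Lat d → E := fun k => if k = 0 then 0 else c k

/-- `2^{js}‖Δ_j g‖_{L²}`. -/
def bw (φ : ℝ → ℝ) (b : Fin d → ℝ) (s : ℝ) (c : Lat d → E) (j : ℤ) : ℝ≥0∞ :=
  (2:ℝ≥0∞) ^ ((j : ℝ) * s) * eL2 (blockOp φ b j c)

/-- The Besov norm `‖·‖_{B^s_{2,r}}`. -/
def besovN (φ : ℝ → ℝ) (b : Fin d → ℝ) (s : ℝ) (r : ℝ≥0∞) (c : Lat d → E) : ℝ≥0∞ :=
  lr r (fun o : Option ℤ => o.elim (‖c 0‖₊ : ℝ≥0∞) (bw φ b s c))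

/-- High-frequency truncated Besov norm `‖·‖^{h;η}_{B^s_{2,r}}` (blocks `2^j ≥ η`). -/
def besovH (φ : ℝ → ℝ) (b : Fin d → ℝ) (η s : ℝ) (r : ℝ≥0∞) (c : Lat d → E) : ℝ≥0∞ :=
  lr r (fun j : ℤ => if η ≤ (2:ℝ) ^ j then bw φ b s c j else 0)

/-- Medium-frequency truncated Besov norm `‖·‖^{m;ζ,η}_{B^s_{2,r}}` (blocks `ζ ≤ 2^j < η`). -/
def besovM (φ : ℝ → ℝ) (b : Fin d → ℝ) (ζ η s : ℝ) (r : ℝ≥0∞) (c : Lat d → E) : ℝ≥0∞ :=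
  lr r (fun j : ℤ => if ζ ≤ (2:ℝ) ^ j ∧ (2:ℝ) ^ j < η then bw φ b s c j else 0)

/-- Low-frequency truncated Besov norm `‖·‖^{l;ζ}_{B^s_{2,r}}` (blocks `2^j < ζ`, plus zero mode). -/
def besovL (φ : ℝ → ℝ) (b : Fin d → ℝ) (ζ s : ℝ) (r : ℝ≥0∞) (c : Lat d → E) : ℝ≥0∞ :=
  lr r (fun o : Option ℤ =>
    o.elim (‖c 0‖₊ : ℝ≥0∞) (fun j => if (2:ℝ) ^ j < ζ then bw φ b s c j else 0))

/-- The Sobolev norm `‖·‖_{H^s}`. -/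
def hsN (b : Fin d → ℝ) (s : ℝ) (c : Lat d → E) : ℝ≥0∞ :=
  ((‖c 0‖₊ : ℝ≥0∞) ^ 2 +
    ∑' k, (if k = 0 then 0
      else ENNReal.ofReal (freqNorm b k ^ (2*s)) * (‖c k‖₊ : ℝ≥0∞) ^ 2)) ^ (1/2 : ℝ)

/-- The Chemin–Lerner norm `‖·‖_{L̃^q_T(B^s_{2,r})}`. -/
def CL (φ : ℝ → ℝ) (b : Fin d → ℝ) (q T : ℝ≥0∞) (s : ℝ) (r : ℝ≥0∞)
    (F : ℝ → Lat d → E) : ℝ≥0∞ :=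
  lr r (fun o : Option ℤ => o.elim (timeLq q T (fun t => (‖F t 0‖₊ : ℝ≥0∞)))
    (fun j => (2:ℝ≥0∞) ^ ((j:ℝ) * s) * timeLq q T (fun t => eL2 (blockOp φ b j (F t)))))

/-- `‖·‖^{h;η}_{L̃^q_T(B^s_{2,r})}`. -/
def CLH (φ : ℝ → ℝ) (b : Fin d → ℝ) (η : ℝ) (q T : ℝ≥0∞) (s : ℝ) (r : ℝ≥0∞)
    (F : ℝ → Lat d → E) : ℝ≥0∞ :=
  lr r (fun j : ℤ => if η ≤ (2:ℝ) ^ j then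
    (2:ℝ≥0∞) ^ ((j:ℝ) * s) * timeLq q T (fun t => eL2 (blockOp φ b j (F t))) else 0)

/-- `‖·‖^{m;ζ,η}_{L̃^q_T(B^s_{2,r})}`. -/
def CLM (φ : ℝ → ℝ) (b : Fin d → ℝ) (ζ η : ℝ) (q T : ℝ≥0∞) (s : ℝ) (r : ℝ≥0∞)
    (F : ℝ → Lat d → E) : ℝ≥0∞ :=
  lr r (fun j : ℤ => if ζ ≤ (2:ℝ) ^ j ∧ (2:ℝ) ^ j < η then
    (2:ℝ≥0∞) ^ ((j:ℝ) * s) * timeLq q T (fun t => eL2 (blockOp φ b j (F t))) else 0)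

/-- `‖·‖^{l;ζ}_{L̃^q_T(B^s_{2,r})}`. -/
def CLL (φ : ℝ → ℝ) (b : Fin d → ℝ) (ζ : ℝ) (q T : ℝ≥0∞) (s : ℝ) (r : ℝ≥0∞)
    (F : ℝ → Lat d → E) : ℝ≥0∞ :=
  lr r (fun o : Option ℤ => o.elim (timeLq q T (fun t => (‖F t 0‖₊ : ℝ≥0∞)))
    (fun j => if (2:ℝ) ^ j < ζ then
      (2:ℝ≥0∞) ^ ((j:ℝ) * s) * timeLq q T (fun t => eL2 (blockOp φ b j (F t))) else 0))

/-- `‖·‖_{L^q_T(B^s_{2,r})}`. -/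
def LqB (φ : ℝ → ℝ) (b : Fin d → ℝ) (q T : ℝ≥0∞) (s : ℝ) (r : ℝ≥0∞)
    (F : ℝ → Lat d → E) : ℝ≥0∞ :=
  timeLq q T (fun t => besovN φ b s r (F t))

/-- `‖·‖^{h;η}_{L^q_T(B^s_{2,r})}`. -/
def LqBH (φ : ℝ → ℝ) (b : Fin d → ℝ) (η : ℝ) (q T : ℝ≥0∞) (s : ℝ) (r : ℝ≥0∞)
    (F : ℝ → Lat d → E) : ℝ≥0∞ :=
  timeLq q T (fun t => besovH φ b η s r (F t))

/-- `‖·‖^{m;ζ,η}_{L^q_T(B^s_{2,r})}`. -/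
def LqBM (φ : ℝ → ℝ) (b : Fin d → ℝ) (ζ η : ℝ) (q T : ℝ≥0∞) (s : ℝ) (r : ℝ≥0∞)
    (F : ℝ → Lat d → E) : ℝ≥0∞ :=
  timeLq q T (fun t => besovM φ b ζ η s r (F t))

/-- `‖·‖^{l;ζ}_{L^q_T(B^s_{2,r})}`. -/
def LqBL (φ : ℝ → ℝ) (b : Fin d → ℝ) (ζ : ℝ) (q T : ℝ≥0∞) (s : ℝ) (r : ℝ≥0∞)
    (F : ℝ → Lat d → E) : ℝ≥0∞ :=
  timeLq q T (fun t => besovL φ b ζ s r (F t))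

/-- `‖·‖_{L^q_T(H^s)}`. -/
def LqHs (b : Fin d → ℝ) (q T : ℝ≥0∞) (s : ℝ) (F : ℝ → Lat d → E) : ℝ≥0∞ :=
  timeLq q T (fun t => hsN b s (F t))

/-- continuity in time, on `[0,T]`, with respect to a seminorm `N`. -/
def ContB (T : ℝ≥0∞) (N : (Lat d → E) → ℝ≥0∞) (F : ℝ → Lat d → E) : Prop :=
  ∀ t₀ ∈ ctimeSet T,
    Tendsto (fun t => N (fun k => F t k - F t₀ k)) (nhdsWithin t₀ (ctimeSet T)) (nhds 0)

/-- Fourier truncation: keep frequencies `|k| ≤ M`. -/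
def cutL (b : Fin d → ℝ) (M : ℝ) (c : Lat d → E) : Lat d → E :=
  fun k => if freqNorm b k ≤ M then c k else 0

/-- Fourier truncation: keep frequencies `|k| > M`. -/
def cutH (b : Fin d → ℝ) (M : ℝ) (c : Lat d → E) : Lat d → E :=
  fun k => if freqNorm b k ≤ M then 0 else c k

end ENorms

/-! ### Differential and product operators on Fourier coefficients -/

/-- product of two scalar periodic distributions (convolution of coefficients). -/
def mulC (b : Fin d → ℝ) (f g : SF d) : SF d :=
  fun m => ((Real.sqrt (vol b) : ℂ))⁻¹ * ∑' k, f k * g (m - k)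

/-- `∂_i`. -/
def pd (b : Fin d → ℝ) (i : Fin d) (f : SF d) : SF d :=
  fun k => Complex.I * (freq b k i : ℂ) * f k

/-- `div`. -/
def divC (b : Fin d → ℝ) (u : VF d) : SF d :=
  fun k => ∑ i, Complex.I * (freq b k i : ℂ) * u k i

/-- `∇`. -/
def gradC (b : Fin d → ℝ) (f : SF d) : VF d :=
  fun k i => Complex.I * (freq b k i : ℂ) * f k

/-- `Δ` on scalars. -/
def lapS (b : Fin d → ℝ) (f : SF d) : SF d :=
  fun k => ((-(freqNorm b k ^ 2) : ℝ) : ℂ) * f k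

/-- `Δ` on vector fields. -/
def lapV (b : Fin d → ℝ) (u : VF d) : VF d :=
  fun k i => ((-(freqNorm b k ^ 2) : ℝ) : ℂ) * u k i

/-- `ℚ = -∇(-Δ)⁻¹ div`, the projection onto gradient fields. -/
def QC (b : Fin d → ℝ) (u : VF d) : VF d := fun k i =>
  if k = 0 then 0 else
    (freq b k i : ℂ) * (∑ j, (freq b k j : ℂ) * u k j) / ((freqNorm b k ^ 2 : ℝ) : ℂ)

/-- `ℙ = I - ℚ`, the Leray projection. -/
def PC (b : Fin d → ℝ) (u : VF d) : VF d := fun k i => u k i - QC b u k i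

/-- product of a scalar field and a vector field. -/
def smulV (b : Fin d → ℝ) (f : SF d) (u : VF d) : VF d :=
  fun k i => mulC b f (fun k' => u k' i) k

/-- scalar product `u · v` of two vector fields. -/
def dotC (b : Fin d → ℝ) (u v : VF d) : SF d :=
  fun k => ∑ i, mulC b (fun k' => u k' i) (fun k' => v k' i) k

/-- `u · ∇v`. -/
def dotGrad (b : Fin d → ℝ) (u v : VF d) : VF d :=
  fun k i => ∑ j, mulC b (fun k' => u k' j) (pd b j (fun k' => v k' i)) k

/-- the Lamé operator `𝒜u = μΔu + (μ+λ)∇div u`. -/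
def AOp (b : Fin d → ℝ) (μ lam : ℝ) (u : VF d) : VF d := fun k i =>
  (μ : ℂ) * ((-(freqNorm b k ^ 2) : ℝ) : ℂ) * u k i
  + ((μ + lam : ℝ) : ℂ) * Complex.I * (freq b k i : ℂ) * divC b u k

/-! ### Spatial realization -/

/-- the function realizing a periodic distribution. -/
def toFun (b : Fin d → ℝ) (c : SF d) (x : EuclideanSpace ℝ (Fin d)) : ℂ :=
  ((Real.sqrt (vol b) : ℂ))⁻¹ *
    ∑' k, c k * Complex.exp (Complex.I * ((∑ i, freq b k i * x i : ℝ) : ℂ))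

/-- `L^∞` norm of a scalar periodic distribution. -/
def linf (b : Fin d → ℝ) (c : SF d) : ℝ≥0∞ :=
  ⨆ x : EuclideanSpace ℝ (Fin d), (‖toFun b c x‖₊ : ℝ≥0∞)

/-- `L^∞` norm of a vector field. -/
def linfV (b : Fin d → ℝ) (u : VF d) : ℝ≥0∞ := ⨆ i : Fin d, linf b (fun k => u k i)

/-- `L^∞` norm of a matrix field. -/
def linfM (b : Fin d → ℝ) (m : Lat d → Fin d → Fin d → ℂ) : ℝ≥0∞ :=
  ⨆ i : Fin d, ⨆ i' : Fin d, linf b (fun k => m k i i')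

/-- the gradient `∇u` of a vector field, a matrix field. -/
def gradVF (b : Fin d → ℝ) (u : VF d) : Lat d → Fin d → Fin d → ℂ :=
  fun k i i' => Complex.I * (freq b k i : ℂ) * u k i'

/-- `L^∞((0,T) × 𝕋_b^d)` norm of a time dependent scalar field. -/
def linfST (b : Fin d → ℝ) (T : ℝ≥0∞) (a : ℝ → SF d) : ℝ≥0∞ :=
  ⨆ t ∈ timeSet T, linf b (a t)

/-- a fundamental domain of the torus. -/
def box (b : Fin d → ℝ) : Set (EuclideanSpace ℝ (Fin d)) :=
  {x | ∀ i, x i ∈ Set.Ico (0:ℝ) (2 * Real.pi * b i)}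

/-- Fourier coefficients of the composition `G ∘ f` for a real-valued `f`. -/
def compC (b : Fin d → ℝ) (G : ℝ → ℝ) (c : SF d) : SF d := fun k =>
  ((Real.sqrt (vol b) : ℂ))⁻¹ *
    ∫ x in box b, (G ((toFun b c x).re) : ℂ) *
      Complex.exp (-Complex.I * ((∑ i, freq b k i * x i : ℝ) : ℂ))

/-! ### `L^p`-based Besov norms (general `p`) -/

/-- `L^p(𝕋_b^d)` norm of the `j`-th dyadic block. -/
def blockLp (φ : ℝ → ℝ) (b : Fin d → ℝ) (p : ℝ≥0∞) (j : ℤ) (c : SF d) : ℝ≥0∞ :=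
  eLpNorm (toFun b (blockOp φ b j c)) p (volume.restrict (box b))

/-- `L^p(𝕋_b^d)` norm of the zero mode `ĝ₀/√|𝕋_b^d|`. -/
def zmLp (b : Fin d → ℝ) (p : ℝ≥0∞) (c : SF d) : ℝ≥0∞ :=
  eLpNorm (fun _ : EuclideanSpace ℝ (Fin d) => ((Real.sqrt (vol b) : ℂ))⁻¹ * c 0) p
    (volume.restrict (box b))

/-- the Besov norm `‖·‖_{B^s_{p,r}}`. -/
def besovP (φ : ℝ → ℝ) (b : Fin d → ℝ) (p : ℝ≥0∞) (s : ℝ) (r : ℝ≥0∞) (c : SF d) : ℝ≥0∞ :=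
  lr r (fun o : Option ℤ =>
    o.elim (zmLp b p c) (fun j => (2:ℝ≥0∞) ^ ((j:ℝ) * s) * blockLp φ b p j c))

/-- the Chemin–Lerner norm `‖·‖_{L̃^q_T(B^s_{p,r})}`. -/
def CLP (φ : ℝ → ℝ) (b : Fin d → ℝ) (p q T : ℝ≥0∞) (s : ℝ) (r : ℝ≥0∞)
    (F : ℝ → SF d) : ℝ≥0∞ :=
  lr r (fun o : Option ℤ => o.elim (timeLq q T (fun t => zmLp b p (F t)))
    (fun j => (2:ℝ≥0∞) ^ ((j:ℝ) * s) * timeLq q T (fun t => blockLp φ b p j (F t))))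

/-- `‖·‖_{L^q_T(B^s_{p,r})}`. -/
def LqBP (φ : ℝ → ℝ) (b : Fin d → ℝ) (p q T : ℝ≥0∞) (s : ℝ) (r : ℝ≥0∞)
    (F : ℝ → SF d) : ℝ≥0∞ :=
  timeLq q T (fun t => besovP φ b p s r (F t))

/-! ### Bony decomposition -/

/-- the paraproduct `T_f g = ∑_j S_{j-2} f Δ_j g`. -/
def paraC (φ : ℝ → ℝ) (b : Fin d → ℝ) (f g : SF d) : SF d :=
  fun m => ∑' j : ℤ, mulC b (SOp φ b (j - 2) f) (blockOp φ b j g) m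

/-- the Bony remainder `R(f,g) = ∑_{|j-j'|≤2} Δ_j f Δ_{j'} g`. -/
def remC (φ : ℝ → ℝ) (b : Fin d → ℝ) (f g : SF d) : SF d :=
  fun m => ∑' p : ℤ × ℤ,
    if |p.1 - p.2| ≤ 2 then mulC b (blockOp φ b p.1 f) (blockOp φ b p.2 g) m else 0

/-! ### The acoustic wave group and the filtered/resonant bilinear operators -/

/-- the acoustic group `𝓛(τ) = e^{-τL}`, `L(a,u) = (div u, ∇a)`, computed explicitly
on Fourier modes. -/
def Lgrp (b : Fin d → ℝ) (τ : ℝ) (A : PairF d) : PairF d :=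
  (fun k =>
    if k = 0 then A.1 k else
      ((Real.cos (freqNorm b k * τ) : ℝ) : ℂ) * A.1 k -
        Complex.I * ((Real.sin (freqNorm b k * τ) : ℝ) : ℂ) *
          ((∑ i, (freq b k i : ℂ) * A.2 k i) / ((freqNorm b k : ℝ) : ℂ)),
   fun k i =>
    if k = 0 then A.2 k i else
      A.2 k i +
        (((Real.cos (freqNorm b k * τ) - 1 : ℝ) : ℂ) *
            ((∑ j, (freq b k j : ℂ) * A.2 k j) / ((freqNorm b k : ℝ) : ℂ)) -
          Complex.I * ((Real.sin (freqNorm b k * τ) : ℝ) : ℂ) * A.1 k) *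
          ((freq b k i / freqNorm b k : ℝ) : ℂ))

/-- membership in `(Ker L)^⊥ = {(a,∇g) : a ∈ L² mean-zero, g ∈ H¹}`. -/
def memKerLp (b : Fin d → ℝ) (A : PairF d) : Prop :=
  A.1 0 = 0 ∧ eL2 A.1 < ⊤ ∧
  ∃ g : SF d, (∀ k i, A.2 k i = Complex.I * (freq b k i : ℂ) * g k) ∧ hsN b 1 g < ⊤

/-- coordinates of a pair in the eigenbasis `Φ_k^α` of `L`. -/
def eig (b : Fin d → ℝ) (A : PairF d) (α : ℝ) (k : Lat d) : ℂ :=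
  (A.1 k - ((α * sg k : ℝ) : ℂ) *
    (∑ i, ((freq b k i / freqNorm b k : ℝ) : ℂ) * A.2 k i)) / ((Real.sqrt 2 : ℝ) : ℂ)

/-- reconstruction of a pair from coordinates in the eigenbasis `Φ_k^α`. -/
def fromEig (b : Fin d → ℝ) (Ec : ℝ → Lat d → ℂ) : PairF d :=
  (fun k => (Ec 1 k + Ec (-1) k) / ((Real.sqrt 2 : ℝ) : ℂ),
   fun k i => -(((sg k * (freq b k i / freqNorm b k) : ℝ)) : ℂ) *
      (Ec 1 k - Ec (-1) k) / ((Real.sqrt 2 : ℝ) : ℂ))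

/-- the filtered operator `𝒬₁^ε(u,B)` (with `τ = t/ε`). -/
def Q1e (b : Fin d → ℝ) (τ : ℝ) (u : VF d) (B : PairF d) : PairF d :=
  Lgrp b (-τ)
    ((fun m => divC b (smulV b (Lgrp b τ B).1 u) m),
     (fun m i => QC b (fun k i' =>
        dotGrad b u (Lgrp b τ B).2 k i' + dotGrad b (Lgrp b τ B).2 u k i') m i))

/-- the modified filtered operator `𝒬̌₁^ε(u,B)`. -/
def Qc1e (b : Fin d → ℝ) (τ : ℝ) (u : VF d) (B : PairF d) : PairF d :=
  Lgrp b (-τ)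
    ((fun m => divC b (smulV b (Lgrp b τ B).1 u) m),
     (fun m i => QC b (fun k i' => ∑ j, Complex.I * (freq b k j : ℂ) *
        mulC b (fun k' => u k' j) (fun k' => (Lgrp b τ B).2 k' i') k) m i))

/-- `𝒬̃₁^ε := 𝒬₁^ε - 𝒬̌₁^ε`. -/
def Qt1e (b : Fin d → ℝ) (τ : ℝ) (u : VF d) (B : PairF d) : PairF d :=
  (fun k => (Q1e b τ u B).1 k - (Qc1e b τ u B).1 k,
   fun k i => (Q1e b τ u B).2 k i - (Qc1e b τ u B).2 k i)

/-- the filtered operator `𝒬₂^ε(A,B)` (with `τ = t/ε`). -/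
def Q2e (b : Fin d → ℝ) (κ τ : ℝ) (A B : PairF d) : PairF d :=
  Lgrp b (-τ)
    ((fun m => (1/2 : ℂ) * divC b (fun k i =>
        mulC b (Lgrp b τ A).1 (fun k' => (Lgrp b τ B).2 k' i) k
        + mulC b (fun k' => (Lgrp b τ A).2 k' i) (Lgrp b τ B).1 k) m),
     (fun m i => (1/2 : ℂ) * (gradC b (dotC b (Lgrp b τ A).2 (Lgrp b τ B).2) m i
        + (κ : ℂ) * gradC b (mulC b (Lgrp b τ A).1 (Lgrp b τ B).1) m i)))

/-- the resonant limit `𝒬₁(v,A)` of `𝒬₁^ε`. -/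
def Q1res (b : Fin d → ℝ) (v : VF d) (A : PairF d) : PairF d :=
  fromEig b (fun γ m =>
    if m = 0 then 0 else
      (Complex.I / ((Real.sqrt (vol b) : ℝ) : ℂ)) *
        ∑' k : Lat d, ∑ α : Bool,
          (if k ≠ 0 ∧
              (if α then (1:ℝ) else -1) * sg k * freqNorm b k = γ * sg m * freqNorm b m then
            eig b A (if α then (1:ℝ) else -1) k *
              (∑ i, (freq b k i : ℂ) * v (m - k) i) *
              (((∑ i, freq b k i * freq b m i) / (freqNorm b k * freqNorm b m) : ℝ) : ℂ)
          else 0))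

/-- the resonant limit `𝒬₂(A,B)` of `𝒬₂^ε`. -/
def Q2res (b : Fin d → ℝ) (κ : ℝ) (A B : PairF d) : PairF d :=
  fromEig b (fun γ m =>
    if m = 0 then 0 else
      (-Complex.I) * (((Real.sqrt (2 * vol b))⁻¹ : ℝ) : ℂ) * (((κ + 3) / 4 : ℝ) : ℂ) *
        ((γ * sg m * freqNorm b m : ℝ) : ℂ) *
        ∑' k : Lat d,
          (if k ≠ 0 ∧ m - k ≠ 0 ∧
              sg k * freqNorm b k + sg (m - k) * freqNorm b (m - k)
                = γ * sg m * freqNorm b m then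
            eig b A γ k * eig b B γ (m - k)
          else 0))

/-- pair of coefficient functions, seen as a single `(d+1)`-component field. -/
def pairC (A : PairF d) : Lat d → ℂ × (Fin d → ℂ) := fun k => (A.1 k, A.2 k)

/-- time-dependent version of `pairC`. -/
def pairT (V : ℝ → PairF d) : ℝ → Lat d → ℂ × (Fin d → ℂ) := fun t => pairC (V t)

/-- the difference of two time-dependent pairs, as a `(d+1)`-component field. -/
def pdiffT (A B : ℝ → PairF d) : ℝ → Lat d → ℂ × (Fin d → ℂ) :=
  fun t k => ((A t).1 k - (B t).1 k, fun i => (A t).2 k i - (B t).2 k i)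

/-! ### The systems -/

/-- `F = -div(aᵉ uᵉ)`, the right-hand side of the mass equation. -/
def Ffield (b : Fin d → ℝ) (a : ℝ → SF d) (u : ℝ → VF d) : ℝ → SF d :=
  fun t k => -(divC b (smulV b (a t) (u t)) k)

/-- `G = -κ a∇a - K̃(εa) a∇a - I(εa)𝒜u + f`, the nonlinear right-hand side of the
momentum equation. -/
def Gfield (b : Fin d → ℝ) (μ lam κ : ℝ) (Kt : ℝ → ℝ) (ε : ℝ) (f : ℝ → VF d)
    (a : ℝ → SF d) (u : ℝ → VF d) : ℝ → VF d :=
  fun t k i =>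
    -(κ : ℂ) * smulV b (a t) (gradC b (a t)) k i
    - smulV b (compC b (fun y => Kt (ε * y)) (a t)) (smulV b (a t) (gradC b (a t))) k i
    - smulV b (compC b (fun y => (ε * y) / (1 + ε * y)) (a t)) (AOp b μ lam (u t)) k i
    + f t k i

/-- the compressible system (CNS_ε), written on Fourier coefficients:
`∂ₜa + ε⁻¹ div u = -div(au)`,
`∂ₜu + u·∇u - 𝒜u + ε⁻¹∇a = -κa∇a - K̃(εa)a∇a - I(εa)𝒜u + f`. -/
def IsCNS (b : Fin d → ℝ) (μ lam κ : ℝ) (Kt : ℝ → ℝ) (ε : ℝ) (T : ℝ≥0∞)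
    (f : ℝ → VF d) (a₀ : SF d) (u₀ : VF d) (a : ℝ → SF d) (u : ℝ → VF d) : Prop :=
  a 0 = a₀ ∧ u 0 = u₀ ∧
  (∀ t ∈ timeSet T, ∀ k, HasDerivAt (fun s => a s k)
      (-((ε⁻¹ : ℝ) : ℂ) * divC b (u t) k + Ffield b a u t k) t) ∧
  (∀ t ∈ timeSet T, ∀ k, ∀ i, HasDerivAt (fun s => u s k i)
      (-(dotGrad b (u t) (u t) k i) + AOp b μ lam (u t) k i
        - ((ε⁻¹ : ℝ) : ℂ) * gradC b (a t) k i + Gfield b μ lam κ Kt ε f a u t k i) t)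

/-- the incompressible Navier–Stokes system (INS):
`∂ₜv - μΔv + v·∇v + ∇π = h`, `div v = 0`. -/
def IsINS (b : Fin d → ℝ) (μ : ℝ) (T : ℝ≥0∞) (h : ℝ → VF d) (v₀ : VF d)
    (v : ℝ → VF d) : Prop :=
  v 0 = v₀ ∧ (∀ t ∈ timeSet T, ∀ k, divC b (v t) k = 0) ∧
  ∃ pr : ℝ → SF d, ∀ t ∈ timeSet T, ∀ k, ∀ i,
    HasDerivAt (fun s => v s k i)
      ((μ : ℂ) * lapV b (v t) k i - dotGrad b (v t) (v t) k i
        - gradC b (pr t) k i + h t k i) t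

/-- the limit system (LS): `∂ₜV + 𝒬₁(v,V) + 𝒬₂(V,V) - (ν/2)ΔV = 0`. -/
def IsLS (b : Fin d → ℝ) (ν κ : ℝ) (T : ℝ≥0∞) (v : ℝ → VF d) (V₀ : PairF d)
    (V : ℝ → PairF d) : Prop :=
  V 0 = V₀ ∧
  (∀ t ∈ timeSet T, ∀ k, HasDerivAt (fun s => (V s).1 k)
      (-(Q1res b (v t) (V t)).1 k - (Q2res b κ (V t) (V t)).1 k
        + ((ν/2 : ℝ) : ℂ) * lapS b (V t).1 k) t) ∧
  (∀ t ∈ timeSet T, ∀ k, ∀ i, HasDerivAt (fun s => (V s).2 k i)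
      (-(Q1res b (v t) (V t)).2 k i - (Q2res b κ (V t) (V t)).2 k i
        + ((ν/2 : ℝ) : ℂ) * lapV b (V t).2 k i) t)

/-! ### Solution classes -/

/-- `(a,u) ∈ C̃_T(B̲^{d/2}_{2,1}) × (C̃_T(B^{d/2-1}_{2,1}) ∩ L¹_T(B̲^{d/2+1}_{2,1}))^d`. -/
def CNSClass (φ : ℝ → ℝ) (b : Fin d → ℝ) (T : ℝ≥0∞)
    (a : ℝ → SF d) (u : ℝ → VF d) : Prop :=
  (∀ t ∈ ctimeSet T, a t 0 = 0) ∧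
  ContB T (besovN φ b ((d:ℝ)/2) 1) a ∧ CL φ b ∞ T ((d:ℝ)/2) 1 a < ⊤ ∧
  ContB T (besovN φ b ((d:ℝ)/2 - 1) 1) u ∧ CL φ b ∞ T ((d:ℝ)/2 - 1) 1 u < ⊤ ∧
  LqB φ b 1 T ((d:ℝ)/2 + 1) 1 (fun t => ul (u t)) < ⊤

/-- `v ∈ (C̃_T(B^{d/2-1}_{2,1}) ∩ L¹_T(B̲^{d/2+1}_{2,1}))^d`. -/
def INSClass (φ : ℝ → ℝ) (b : Fin d → ℝ) (T : ℝ≥0∞) (v : ℝ → VF d) : Prop :=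
  ContB T (besovN φ b ((d:ℝ)/2 - 1) 1) v ∧ CL φ b ∞ T ((d:ℝ)/2 - 1) 1 v < ⊤ ∧
  LqB φ b 1 T ((d:ℝ)/2 + 1) 1 (fun t => ul (v t)) < ⊤

/-- `V ∈ (Ker L)^⊥ ∩ (C̃_T(B^{d/2-1}_{2,1}) ∩ L¹_T(B^{d/2+1}_{2,1}))^{d+1}`. -/
def LSClass (φ : ℝ → ℝ) (b : Fin d → ℝ) (T : ℝ≥0∞) (V : ℝ → PairF d) : Prop :=
  (∀ t ∈ ctimeSet T, memKerLp b (V t)) ∧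
  ContB T (besovN φ b ((d:ℝ)/2 - 1) 1) (pairT V) ∧
  CL φ b ∞ T ((d:ℝ)/2 - 1) 1 (pairT V) < ⊤ ∧
  LqB φ b 1 T ((d:ℝ)/2 + 1) 1 (pairT V) < ⊤

/-! ### The quantities of the energy framework -/

/-- `t ↦ ℚuᵉ(t)`. -/
def nQu (b : Fin d → ℝ) (u : ℝ → VF d) : ℝ → VF d := fun t => QC b (u t)

/-- `t ↦ ℙuᵉ(t)`. -/
def nPu (b : Fin d → ℝ) (u : ℝ → VF d) : ℝ → VF d := fun t => PC b (u t)

/-- `t ↦ (aᵉ(t), ℚuᵉ(t))` as a `(d+1)`-component field. -/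
def pairAQ (b : Fin d → ℝ) (a : ℝ → SF d) (u : ℝ → VF d) :
    ℝ → Lat d → ℂ × (Fin d → ℂ) :=
  fun t k => (a t k, QC b (u t) k)

/-- the filtered unknown `Vᵉ(t) = 𝓛(-t/ε)(aᵉ(t), ℚuᵉ(t))`. -/
def VepsT (b : Fin d → ℝ) (ε : ℝ) (a : ℝ → SF d) (u : ℝ → VF d) : ℝ → PairF d :=
  fun t => Lgrp b (-(t/ε)) (a t, QC b (u t))

/-- `t ↦ ℙuᵉ(t) - v(t)`. -/
def wdiffT (b : Fin d → ℝ) (u : ℝ → VF d) (v : ℝ → VF d) : ℝ → VF d :=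
  fun t k i => PC b (u t) k i - v t k i

/-- the quantity `X^ε(T)`. -/
def XeQ (φ : ℝ → ℝ) (b : Fin d → ℝ) (η₀ ε : ℝ) (T : ℝ≥0∞)
    (a : ℝ → SF d) (u : ℝ → VF d) : ℝ≥0∞ :=
  ENNReal.ofReal ε * CLH φ b (η₀/ε) ∞ T ((d:ℝ)/2) 1 a
  + (ENNReal.ofReal ε)⁻¹ * LqBH φ b (η₀/ε) 1 T ((d:ℝ)/2) 1 a
  + (CLL φ b (η₀/ε) ∞ T ((d:ℝ)/2 - 1) 1 a + LqBL φ b (η₀/ε) 1 T ((d:ℝ)/2 + 1) 1 a)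
  + (CL φ b ∞ T ((d:ℝ)/2 - 1) 1 (nQu b u) + LqB φ b 1 T ((d:ℝ)/2 + 1) 1 (nQu b u))

/-- the quantity `P^ε(T)` (and `P` if applied to `v`). -/
def PeQ (φ : ℝ → ℝ) (b : Fin d → ℝ) (T : ℝ≥0∞) (w : ℝ → VF d) : ℝ≥0∞ :=
  CL φ b ∞ T ((d:ℝ)/2 - 1) 1 w + LqB φ b 1 T ((d:ℝ)/2 + 1) 1 (fun t => ul (w t))

/-- the quantity `[aᵉ,uᵉ]^{ζ,ε}_{h,m}(T)`. -/
def BhmQ (φ : ℝ → ℝ) (b : Fin d → ℝ) (η₀ ζ ε : ℝ) (T : ℝ≥0∞)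
    (a : ℝ → SF d) (u : ℝ → VF d) : ℝ≥0∞ :=
  ENNReal.ofReal ε * CL φ b ∞ T ((d:ℝ)/2) 1 a
  + ENNReal.ofReal ε * CLH φ b (η₀/ε) ∞ T ((d:ℝ)/2) 1 a
  + (ENNReal.ofReal ε)⁻¹ * LqBH φ b (η₀/ε) 1 T ((d:ℝ)/2) 1 a
  + (CLH φ b (η₀/ε) ∞ T ((d:ℝ)/2 - 1) 1 (nQu b u)
      + LqBH φ b (η₀/ε) 1 T ((d:ℝ)/2 + 1) 1 (nQu b u))
  + (CLM φ b ζ (η₀/ε) ∞ T ((d:ℝ)/2 - 1) 1 (pairAQ b a u)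
      + LqBM φ b ζ (η₀/ε) 1 T ((d:ℝ)/2 + 1) 1 (pairAQ b a u))
  + (CLH φ b ζ ∞ T ((d:ℝ)/2 - 1) 1 (nPu b u) + LqBH φ b ζ 1 T ((d:ℝ)/2 + 1) 1 (nPu b u))

/-- the quantity `[W,u]^{ζ,ε}_l(T)`. -/
def BlQ (φ : ℝ → ℝ) (b : Fin d → ℝ) {E : Type*} [NormedAddCommGroup E] [NormedSpace ℝ E]
    (ζ : ℝ) (T : ℝ≥0∞) (W : ℝ → Lat d → E) (w : ℝ → VF d) : ℝ≥0∞ :=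
  (CLL φ b ζ ∞ T ((d:ℝ)/2 - 1) 1 W + CLL φ b ζ 2 T ((d:ℝ)/2) 1 W)
  + (CLL φ b ζ ∞ T ((d:ℝ)/2 - 1) 1 w + LqBL φ b ζ 1 T ((d:ℝ)/2 + 1) 1 (fun t => ul (w t)))

/-- the quantity `Y^{ζ,ε}(T)`. -/
def YQ (φ : ℝ → ℝ) (b : Fin d → ℝ) (η₀ ζ ε : ℝ) (T : ℝ≥0∞)
    (a : ℝ → SF d) (u : ℝ → VF d) : ℝ≥0∞ :=
  BhmQ φ b η₀ ζ ε T a u + BlQ φ b ζ T (pairAQ b a u) (nPu b u)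

/-- the quantity `D^{ζ,ε}(T)`. -/
def DQ (φ : ℝ → ℝ) (b : Fin d → ℝ) (η₀ ζ ε : ℝ) (T : ℝ≥0∞)
    (a : ℝ → SF d) (u : ℝ → VF d) (V : ℝ → PairF d) (v : ℝ → VF d) : ℝ≥0∞ :=
  BhmQ φ b η₀ ζ ε T a u + BlQ φ b ζ T (pdiffT (VepsT b ε a u) V) (wdiffT b u v)

/-- the quantity `Z^ε_θ(T) = ‖Vᵉ-V‖_{L̃^∞_T(H^{d/2-1-θ}) ∩ L²_T(H^{d/2-θ})}`. -/
def ZQ (φ : ℝ → ℝ) (b : Fin d → ℝ) (θ : ℝ) (T : ℝ≥0∞) (ε : ℝ)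
    (a : ℝ → SF d) (u : ℝ → VF d) (V : ℝ → PairF d) : ℝ≥0∞ :=
  CL φ b ∞ T ((d:ℝ)/2 - 1 - θ) 2 (pdiffT (VepsT b ε a u) V)
  + timeLq 2 T (fun t => hsN b ((d:ℝ)/2 - θ) (pdiffT (VepsT b ε a u) V t))

/-- the quantity `W^ε_θ(T) = ‖ℙuᵉ-v‖_{L̃^∞_T(B^{d/2-1-θ}_{2,1}) ∩ L¹_T(B̲^{d/2+1-θ}_{2,1})}`. -/
def WQ (φ : ℝ → ℝ) (b : Fin d → ℝ) (θ : ℝ) (T : ℝ≥0∞)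
    (u : ℝ → VF d) (v : ℝ → VF d) : ℝ≥0∞ :=
  CL φ b ∞ T ((d:ℝ)/2 - 1 - θ) 1 (wdiffT b u v)
  + LqB φ b 1 T ((d:ℝ)/2 + 1 - θ) 1 (fun t => ul (wdiffT b u v t))

/-- the quantity `X = ‖V‖_{L̃^∞_{T₀}(B^{d/2-1}_{2,1}) ∩ L¹_{T₀}(B^{d/2+1}_{2,1})}`. -/
def XQ (φ : ℝ → ℝ) (b : Fin d → ℝ) (T₀ : ℝ≥0∞) (V : ℝ → PairF d) : ℝ≥0∞ :=
  CL φ b ∞ T₀ ((d:ℝ)/2 - 1) 1 (pairT V) + LqB φ b 1 T₀ ((d:ℝ)/2 + 1) 1 (pairT V)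

/-- the quantity `X₀`. -/
def X0Q (φ : ℝ → ℝ) (b : Fin d → ℝ) (η₀ ε : ℝ) (a₀ : SF d) (u₀ : VF d) : ℝ≥0∞ :=
  besovL φ b (η₀/ε) ((d:ℝ)/2 - 1) 1 a₀
  + ENNReal.ofReal ε * besovH φ b (η₀/ε) ((d:ℝ)/2) 1 a₀
  + besovN φ b ((d:ℝ)/2 - 1) 1 (QC b u₀)

/-- the quantity `P₀`. -/
def P0Q (φ : ℝ → ℝ) (b : Fin d → ℝ) (u₀ : VF d) : ℝ≥0∞ :=
  besovN φ b ((d:ℝ)/2 - 1) 1 (PC b u₀)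

/-- the quantity `ℚ_f`, where `fQ'` is the time derivative of `ℚf`. -/
def QfQ (φ : ℝ → ℝ) (b : Fin d → ℝ) (T₀ : ℝ≥0∞) (S : ℝ) (f fQ' : ℝ → VF d) : ℝ≥0∞ :=
  LqB φ b 1 T₀ ((d:ℝ)/2 - 1) 1 (fun t => QC b (f t))
  + LqHs b ∞ T₀ (-S) (fun t => QC b (f t))
  + LqHs b 1 T₀ (-S) fQ'

/-- the quantity `ℚ_f(0) = ‖ℚf(0)‖_{H^{-S}}`. -/
def Qf0Q (b : Fin d → ℝ) (S : ℝ) (f : ℝ → VF d) : ℝ≥0∞ := hsN b (-S) (QC b (f 0))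

/-- the quantity `ℙ_f`. -/
def PfQ (φ : ℝ → ℝ) (b : Fin d → ℝ) (T₀ : ℝ≥0∞) (f : ℝ → VF d) : ℝ≥0∞ :=
  LqB φ b 1 T₀ ((d:ℝ)/2 - 1) 1 (fun t => PC b (f t))


/-! ### `ℓ²` lemmas -/

/-- `ℓ²` norm of a family of extended nonnegative numbers. -/
def ltwo {α : Type*} (f : α → ℝ≥0∞) : ℝ≥0∞ := (∑' k, f k ^ 2) ^ (1/2 : ℝ)

lemma ltwo_sq {α : Type*} (f : α → ℝ≥0∞) : ltwo f ^ 2 = ∑' k, f k ^ 2 := by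
  unfold ltwo
  rw [← ENNReal.rpow_natCast, ← ENNReal.rpow_mul]
  norm_num

lemma ltwo_le {α : Type*} (f : α → ℝ≥0∞) (X : ℝ≥0∞) (h : ∑' k, f k ^ 2 ≤ X ^ 2) :
    ltwo f ≤ X := by
  rw [← ltwo_sq] at h
  exact (ENNReal.pow_le_pow_left_iff (by norm_num)).1 h

lemma ltwo_mono {α : Type*} {f g : α → ℝ≥0∞} (h : ∀ k, f k ≤ g k) : ltwo f ≤ ltwo g := by
  unfold ltwo
  gcongr with k
  exact h k

lemma ltwo_const_mul {α : Type*} (c : ℝ≥0∞) (f : α → ℝ≥0∞) :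
    ltwo (fun k => c * f k) = c * ltwo f := by
  apply le_antisymm
  · apply ltwo_le
    simp_rw [mul_pow]
    rw [ltwo_sq, ENNReal.tsum_mul_left]
  · refine (ENNReal.pow_le_pow_left_iff (n := 2) (by norm_num)).1 ?_
    rw [mul_pow, ltwo_sq, ltwo_sq]
    simp_rw [mul_pow]
    rw [ENNReal.tsum_mul_left]

lemma ltwo_CS {α : Type*} (f g : α → ℝ≥0∞) : ∑' k, f k * g k ≤ ltwo f * ltwo g := by
  let _ : MeasurableSpace α := ⊤
  have := ENNReal.lintegral_mul_le_Lp_mul_Lq (Measure.count : Measure α)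
    (f := f) (g := g) (p := 2) (q := 2) Real.HolderConjugate.two_two
    (measurable_from_top).aemeasurable (measurable_from_top).aemeasurable
  simp only [lintegral_count' measurable_from_top] at this
  simpa [ltwo] using this

lemma ltwo_tsum {α ι : Type*} (f : ι → α → ℝ≥0∞) :
    ltwo (fun k => ∑' i, f i k) ≤ ∑' i, ltwo (f i) := by
  apply ltwo_le
  calc ∑' k, (∑' i, f i k) ^ 2 = ∑' k, ∑' i, ∑' j, f i k * f j k := by
        congr 1; ext k
        rw [sq, ← ENNReal.tsum_mul_right]
        congr 1; ext i
        rw [← ENNReal.tsum_mul_left]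
    _ = ∑' i, ∑' j, ∑' k, f i k * f j k := by
        rw [ENNReal.tsum_comm]
        congr 1; ext i
        rw [ENNReal.tsum_comm]
    _ ≤ ∑' i, ∑' j, ltwo (f i) * ltwo (f j) := by
        gcongr with i j
        exact ltwo_CS _ _
    _ = (∑' i, ltwo (f i)) ^ 2 := by
        simp_rw [ENNReal.tsum_mul_left, ENNReal.tsum_mul_right, sq]

lemma ltwo_add {α : Type*} (f g : α → ℝ≥0∞) :
    ltwo (fun k => f k + g k) ≤ ltwo f + ltwo g := by
  have := ltwo_tsum (fun b : Bool => if b then f else g)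
  simpa [tsum_bool, add_comm] using this

lemma sq_tsum_mul_le {α : Type*} (f g : α → ℝ≥0∞) :
    (∑' k, f k * g k) ^ 2 ≤ (∑' k, f k ^ 2) * ∑' k, g k ^ 2 := by
  rw [← ltwo_sq, ← ltwo_sq, ← mul_pow]
  gcongr
  exact ltwo_CS _ _

lemma eL2_eq [NormedAddCommGroup E] [NormedSpace ℝ E] (c : Lat d → E) :
    eL2 c = ltwo (fun k => (‖c k‖₊ : ℝ≥0∞)) := rfl

lemma lr_one_option (f : Option ℤ → ℝ≥0∞) : lr 1 f = f none + ∑' j : ℤ, f (some j) := by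
  unfold lr
  simp only [ENNReal.one_ne_top, if_false, ENNReal.toReal_one, ENNReal.rpow_one, div_one]
  rw [← (Equiv.optionEquivSumPUnit.{0} ℤ).symm.tsum_eq, ENNReal.summable.tsum_sum ENNReal.summable]
  simp [add_comm]

/-! ### frequency lemmas -/

lemma freqNorm_nonneg (b : Fin d → ℝ) (k : Lat d) : 0 ≤ freqNorm b k := Real.sqrt_nonneg _

lemma freqNorm_sq (b : Fin d → ℝ) (k : Lat d) : freqNorm b k ^ 2 = ∑ i, (freq b k i) ^ 2 :=
  Real.sq_sqrt (Finset.sum_nonneg fun i _ => sq_nonneg _)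

lemma abs_freq_le (b : Fin d → ℝ) (k : Lat d) (i : Fin d) : |freq b k i| ≤ freqNorm b k := by
  refine abs_le_of_sq_le_sq ?_ (freqNorm_nonneg b k)
  rw [freqNorm_sq]
  exact Finset.single_le_sum (f := fun i => (freq b k i) ^ 2)
    (fun i _ => sq_nonneg _) (Finset.mem_univ i)

lemma freqNorm_pos (b : Fin d → ℝ) (hb : ∀ i, 0 < b i) {k : Lat d} (hk : k ≠ 0) :
    0 < freqNorm b k := by
  obtain ⟨i, hi⟩ : ∃ i, k i ≠ 0 := by
    by_contra h; push Not at h; exact hk (funext h)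
  refine lt_of_lt_of_le ?_ (abs_freq_le b k i)
  unfold freq
  have : (k i : ℝ) ≠ 0 := by exact_mod_cast hi
  have := (hb i).ne'
  positivity

lemma freqNorm_zero (b : Fin d → ℝ) : freqNorm b (0 : Lat d) = 0 := by
  simp [freqNorm, freq]

lemma freqNorm_eq (b : Fin d → ℝ) (k : Lat d) :
    freqNorm b k = ‖(WithLp.toLp 2 (freq b k) : EuclideanSpace ℝ (Fin d))‖ := by
  rw [EuclideanSpace.norm_eq]; simp [freqNorm]

lemma freqNorm_add_le (b : Fin d → ℝ) (k l : Lat d) :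
    freqNorm b (k + l) ≤ freqNorm b k + freqNorm b l := by
  simp only [freqNorm_eq]
  refine le_trans (le_of_eq ?_) (norm_add_le _ _)
  congr 1
  ext i
  simp [freq, add_div]

lemma freqNorm_neg (b : Fin d → ℝ) (k : Lat d) : freqNorm b (-k) = freqNorm b k := by
  simp [freqNorm, freq, neg_div]

lemma freqNorm_sub_le (b : Fin d → ℝ) (k l : Lat d) :
    freqNorm b (k - l) ≤ freqNorm b k + freqNorm b l := by
  rw [sub_eq_add_neg, ← freqNorm_neg b l]; exact freqNorm_add_le _ _ _

lemma sg_sq (k : Lat d) : sg k ^ 2 = 1 := by unfold sg; split_ifs <;> norm_num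
lemma abs_sg (k : Lat d) : |sg k| = 1 := by unfold sg; split_ifs <;> norm_num

/-- two lattice points on a common line through the origin. -/
def par (k m : Lat d) : Prop := ∀ i j, k i * m j = k j * m i

lemma par_symm {k m : Lat d} (h : par k m) : par m k := fun i j => by
  have := h j i; linarith

lemma par_sub {k m : Lat d} (h : par k m) : par (m - k) m := fun i j => by
  have := h i j
  simp only [Pi.sub_apply]; linarith

lemma par_sub_iff {k m : Lat d} : par (m - k) m ↔ par k m :=
  ⟨fun h => by simpa using par_sub h, par_sub⟩

lemma par_of_res (b : Fin d → ℝ) (hb : ∀ i, 0 < b i) (γ : ℝ) (hγ : γ ^ 2 = 1) (k m : Lat d)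
    (h : sg k * freqNorm b k + sg (m - k) * freqNorm b (m - k) = γ * sg m * freqNorm b m) :
    par k m := by
  set l := m - k with hl
  have hm : m = k + l := by simp [hl]
  set x := freq b k with hx
  set y := freq b l with hy
  have hxy : ∀ i, freq b m i = x i + y i := fun i => by
    simp [hm, hx, hy, freq, add_div]
  have h1 := congrArg (· ^ 2) h
  simp only [add_sq, mul_pow, sg_sq, hγ, one_mul, freqNorm_sq] at h1
  have h2 : ∑ i, freq b m i ^ 2 = ∑ i, x i ^ 2 + 2 * ∑ i, x i * y i + ∑ i, y i ^ 2 := by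
    rw [Finset.mul_sum, ← Finset.sum_add_distrib, ← Finset.sum_add_distrib]
    exact Finset.sum_congr rfl fun i _ => by rw [hxy]; ring
  have h3 : ∑ i, x i * y i = sg k * freqNorm b k * (sg l * freqNorm b l) := by
    rw [h2] at h1; linarith
  have h4 : (∑ i, x i * y i) ^ 2 = (∑ i, x i ^ 2) * ∑ i, y i ^ 2 := by
    rw [h3]; simp only [mul_pow, sg_sq, one_mul, freqNorm_sq]; rfl
  have h5 : ∑ i, ∑ j, (x i * y j - x j * y i) ^ 2 = 0 := by
    have : ∀ i j, (x i * y j - x j * y i) ^ 2 = x i ^ 2 * y j ^ 2 + y i ^ 2 * x j ^ 2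
        - 2 * ((x i * y i) * (x j * y j)) := fun i j => by ring
    simp_rw [this, Finset.sum_sub_distrib, Finset.sum_add_distrib, ← Finset.mul_sum,
      ← Finset.sum_mul]
    linarith [h4, sq (∑ i, x i * y i)]
  have h6 : ∀ i j, x i * y j = x j * y i := by
    intro i j
    have := (Finset.sum_eq_zero_iff_of_nonneg
      (fun i _ => Finset.sum_nonneg fun j _ => sq_nonneg _)).1 h5 i (Finset.mem_univ i)
    have := (Finset.sum_eq_zero_iff_of_nonneg
      (fun j _ => sq_nonneg _)).1 this j (Finset.mem_univ j)
    exact sub_eq_zero.1 (pow_eq_zero_iff (two_ne_zero) |>.1 this)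
  intro i j
  have h7 := h6 i j
  simp only [hx, hy, freq] at h7
  have hbi := (hb i).ne'
  have hbj := (hb j).ne'
  field_simp at h7
  have h8 : k i * l j = k j * l i := by exact_mod_cast h7
  rw [hm]; simp only [Pi.add_apply]; linarith

/-- the number of lattice points on a line in a ball. -/
lemma line_count (b : Fin d → ℝ) (hb : ∀ i, 0 < b i) :
    ∃ M : ℝ, 0 < M ∧ ∀ (R : ℝ), 0 ≤ R → ∀ m : Lat d, m ≠ 0 →
      ∑' k : Lat d, (if k ≠ 0 ∧ par k m ∧ freqNorm b k ≤ R then (1 : ℝ≥0∞) else 0)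
        ≤ ENNReal.ofReal (M * R) := by
  refine ⟨2 * (∑ i, b i + 1), by have := Finset.sum_nonneg (fun i (_ : i ∈ Finset.univ) => (hb i).le); linarith, fun R hR m hm => ?_⟩
  obtain ⟨i, hi⟩ : ∃ i, m i ≠ 0 := by
    by_contra h; push Not at h; exact hm (funext h)
  have hbi : b i ≤ ∑ i, b i + 1 := by
    have := Finset.single_le_sum (fun i (_ : i ∈ Finset.univ) => (hb i).le) (Finset.mem_univ i)
    linarith
  set S : Set (Lat d) := {k | k ≠ 0 ∧ par k m ∧ freqNorm b k ≤ R} with hS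
  set I : Finset ℤ := (Finset.Icc (-⌊b i * R⌋) ⌊b i * R⌋).erase 0 with hI
  have hfl : 0 ≤ ⌊b i * R⌋ := Int.floor_nonneg.2 (mul_nonneg (hb i).le hR)
  have hinj : Set.InjOn (fun k : Lat d => k i) S := by
    intro k hk l hl hkl
    simp only at hkl
    ext j
    have h1 := hk.2.1 i j
    have h2 := hl.2.1 i j
    rw [hkl, h2] at h1
    exact (mul_right_cancel₀ hi h1).symm
  have hmaps : Set.MapsTo (fun k : Lat d => k i) S (I : Set ℤ) := by
    intro k hk
    simp only [hI, Finset.coe_erase, Finset.coe_Icc, Set.mem_sdiff, Set.mem_Icc, Set.mem_singleton_iff]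
    have h1 := (abs_freq_le b k i).trans hk.2.2
    have h2 : |(k i : ℝ)| ≤ b i * R := by
      rw [freq, abs_div, abs_of_pos (hb i), div_le_iff₀ (hb i)] at h1; linarith
    have h3 : |k i| ≤ ⌊b i * R⌋ := by
      rw [Int.le_floor]; push_cast; exact h2
    refine ⟨abs_le.1 h3, fun h0 => hk.1 ?_⟩
    ext j
    have := hk.2.1 i j
    rw [h0, zero_mul] at this
    simpa [hi] using this.symm
  have hcard : S.encard ≤ I.card := by
    rw [← Set.encard_coe_eq_coe_finsetCard]
    exact Set.encard_le_encard_of_injOn hmaps hinj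
  have hIc : (I.card : ℝ) ≤ 2 * (∑ i, b i + 1) * R := by
    have h0 : (I.card : ℤ) = 2 * ⌊b i * R⌋ := by
      rw [hI, Finset.card_erase_of_mem (by simp [hfl]), Int.card_Icc]
      omega
    have h1 : (I.card : ℝ) = 2 * (⌊b i * R⌋ : ℝ) := by exact_mod_cast h0
    have h2 := Int.floor_le (b i * R)
    nlinarith
  have : ∑' k : Lat d, (if k ≠ 0 ∧ par k m ∧ freqNorm b k ≤ R then (1 : ℝ≥0∞) else 0)
      = ((S.encard : ℕ∞) : ℝ≥0∞) := by
    rw [← ENNReal.tsum_set_one, tsum_subtype S (fun _ => (1 : ℝ≥0∞))]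
    congr 1
    ext k
    by_cases hk : k ∈ S
    · rw [Set.indicator_of_mem hk]; exact if_pos hk
    · rw [Set.indicator_of_notMem hk]; exact if_neg hk
  rw [this]
  calc ((S.encard : ℕ∞) : ℝ≥0∞) ≤ ((I.card : ℕ∞) : ℝ≥0∞) := by exact_mod_cast hcard
    _ = ENNReal.ofReal (I.card : ℝ) := by simp
    _ ≤ _ := ENNReal.ofReal_le_ofReal hIc


/-! ### the collinear convolution -/

/-- the dyadic annulus containing the support of `φ(2^{-q}·)`. -/
def annul (b : Fin d → ℝ) (q : ℤ) (k : Lat d) : Prop :=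
  3/4 * (2:ℝ) ^ q ≤ freqNorm b k ∧ freqNorm b k ≤ 8/3 * (2:ℝ) ^ q

lemma annul_ne {b : Fin d → ℝ} {q : ℤ} {k : Lat d} (h : annul b q k) : k ≠ 0 := by
  rintro rfl
  have h1 := h.1
  rw [freqNorm_zero] at h1
  have : (0:ℝ) < 2 ^ q := by positivity
  linarith

/-- convolution restricted to collinear frequencies. -/
def conv (f g : Lat d → ℝ≥0∞) (m : Lat d) : ℝ≥0∞ :=
  ∑' k, if par k m then f k * g (m - k) else 0

lemma conv_comm (f g : Lat d → ℝ≥0∞) : conv f g = conv g f := by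
  ext m
  unfold conv
  rw [← (Equiv.subLeft m).tsum_eq]
  congr 1; ext k
  simp only [Equiv.subLeft_apply, sub_sub_cancel, par_sub_iff, mul_comm]

lemma conv_K1 (b : Fin d → ℝ) (R : ℝ) (N : ℝ≥0∞)
    (hN : ∀ m : Lat d, m ≠ 0 →
      ∑' k : Lat d, (if k ≠ 0 ∧ par k m ∧ freqNorm b k ≤ R then (1 : ℝ≥0∞) else 0) ≤ N)
    (f g : Lat d → ℝ≥0∞) (hf : ∀ k, f k ≠ 0 → k ≠ 0 ∧ freqNorm b k ≤ R) :
    ltwo (fun m => if m ≠ 0 then conv f g m else 0) ≤ N ^ (1/2 : ℝ) * (ltwo f * ltwo g) := by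
  apply ltwo_le
  have hNN : (N ^ (1/2 : ℝ)) ^ 2 = N := by
    rw [← ENNReal.rpow_natCast, ← ENNReal.rpow_mul]; norm_num
  rw [mul_pow, mul_pow, hNN, ltwo_sq, ltwo_sq]
  calc ∑' m, (if m ≠ 0 then conv f g m else 0) ^ 2
      ≤ ∑' m, N * ∑' k, f k ^ 2 * g (m - k) ^ 2 := by
        gcongr with m
        by_cases hm : m = 0
        · simp [hm]
        rw [if_pos hm]
        have : conv f g m = ∑' k, (if k ≠ 0 ∧ par k m ∧ freqNorm b k ≤ R then (1 : ℝ≥0∞) else 0)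
            * (f k * g (m - k)) := by
          unfold conv
          congr 1; ext k
          by_cases hk : f k = 0
          · simp [hk]
          · simp [hf k hk]
        rw [this]
        refine (sq_tsum_mul_le _ _).trans ?_
        gcongr ?_ * ?_
        · refine le_trans (le_of_eq ?_) (hN m hm)
          congr 1; ext k
          split_ifs <;> simp
        · simp_rw [mul_pow]; exact le_rfl
    _ = N * ((∑' k, f k ^ 2) * ∑' k, g k ^ 2) := by
        rw [ENNReal.tsum_mul_left, ENNReal.tsum_comm, ← ENNReal.tsum_mul_right]
        congr 2; ext k
        rw [ENNReal.tsum_mul_left]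
        congr 1
        exact (Equiv.subRight k).tsum_eq (fun k => g k ^ 2)

lemma conv_K3 (b : Fin d → ℝ) (R : ℝ) (N : ℝ≥0∞)
    (hN : ∀ m : Lat d, m ≠ 0 →
      ∑' k : Lat d, (if k ≠ 0 ∧ par k m ∧ freqNorm b k ≤ R then (1 : ℝ≥0∞) else 0) ≤ N)
    (f g : Lat d → ℝ≥0∞) (hf : f 0 = 0) :
    ltwo (fun m => if m ≠ 0 ∧ freqNorm b m ≤ R then conv f g m else 0)
      ≤ N ^ (1/2 : ℝ) * (ltwo f * ltwo g) := by
  apply ltwo_le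
  have hNN : (N ^ (1/2 : ℝ)) ^ 2 = N := by
    rw [← ENNReal.rpow_natCast, ← ENNReal.rpow_mul]; norm_num
  rw [mul_pow, mul_pow, hNN, ltwo_sq, ltwo_sq]
  calc ∑' m, (if m ≠ 0 ∧ freqNorm b m ≤ R then conv f g m else 0) ^ 2
      ≤ ∑' m, (∑' k, (if m ≠ 0 ∧ par m k ∧ freqNorm b m ≤ R then (1 : ℝ≥0∞) else 0) * f k ^ 2)
          * ∑' k, g k ^ 2 := by
        gcongr with m
        by_cases hm : m ≠ 0 ∧ freqNorm b m ≤ R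
        swap
        · simp [hm]
        rw [if_pos hm]
        have : conv f g m = ∑' k, (if par k m then f k else 0) * g (m - k) := by
          unfold conv
          congr 1; ext k
          split_ifs <;> simp
        rw [this]
        refine (sq_tsum_mul_le _ _).trans ?_
        gcongr ?_ * ?_
        · gcongr with k
          by_cases hk : par k m
          · simp [hk, par_symm hk, hm]
          · simp [hk]
        · exact le_of_eq ((Equiv.subLeft m).tsum_eq (fun k => g k ^ 2))
    _ ≤ N * ((∑' k, f k ^ 2) * ∑' k, g k ^ 2) := by
        rw [ENNReal.tsum_mul_right, ← mul_assoc, ENNReal.tsum_comm]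
        gcongr ?_ * _
        rw [← ENNReal.tsum_mul_left]
        refine ENNReal.tsum_le_tsum fun k => ?_
        rw [ENNReal.tsum_mul_right]
        by_cases hk : k = 0
        · simp [hk, hf]
        gcongr
        exact hN k hk

lemma ofReal_two_zpow (q : ℤ) : ENNReal.ofReal ((2:ℝ) ^ q) = (2:ℝ≥0∞) ^ (q:ℝ) := by
  rw [← Real.rpow_intCast, ← ENNReal.ofReal_rpow_of_pos (by norm_num)]
  norm_num

lemma two_rpow_add (x y : ℝ) : (2:ℝ≥0∞) ^ (x + y) = 2 ^ x * 2 ^ y :=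
  ENNReal.rpow_add _ _ (by norm_num) (by norm_num)

lemma two_rpow_mono {x y : ℝ} (h : x ≤ y) : (2:ℝ≥0∞) ^ x ≤ 2 ^ y :=
  ENNReal.rpow_le_rpow_of_exponent_le (by norm_num) h

lemma two_rpow_lt_top (x : ℝ) : (2:ℝ≥0∞) ^ x < ⊤ :=
  (ENNReal.rpow_ne_top_of_ne_zero (by norm_num) (by norm_num)).lt_top

/-- the three block estimates. -/
lemma conv_blocks (b : Fin d → ℝ) (hb : ∀ i, 0 < b i) :
    ∃ K : ℝ≥0∞, K < ⊤ ∧ ∀ (i j q : ℤ) (f g : Lat d → ℝ≥0∞),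
      (∀ k, f k ≠ 0 → annul b i k) → (∀ k, g k ≠ 0 → annul b j k) →
      ∀ x : ℤ, (x = i ∨ x = j ∨ x = q) →
      ltwo (fun m => if annul b q m then conv f g m else 0)
        ≤ K * (2:ℝ≥0∞) ^ ((x:ℝ) * (1/2)) * (ltwo f * ltwo g) := by
  obtain ⟨M, hM, hcount⟩ := line_count b hb
  refine ⟨ENNReal.ofReal (M * (8/3)) ^ (1/2:ℝ), ?_, ?_⟩
  · exact ENNReal.rpow_lt_top_of_nonneg (by norm_num) ENNReal.ofReal_ne_top
  intro i j q f g hf hg x hx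
  have hNx : ENNReal.ofReal (M * (8/3)) ^ (1/2:ℝ) * (2:ℝ≥0∞) ^ ((x:ℝ) * (1/2))
      = ENNReal.ofReal (M * (8/3 * 2 ^ x)) ^ (1/2:ℝ) := by
    rw [← mul_assoc, ENNReal.ofReal_mul (p := M * (8/3)) (by positivity), ofReal_two_zpow,
      ENNReal.mul_rpow_of_nonneg _ _ (by norm_num), ← ENNReal.rpow_mul]
  have hN := hcount (8/3 * 2 ^ x) (by positivity)
  rw [hNx]
  rcases hx with rfl | rfl | rfl
  · refine le_trans (ltwo_mono ?_) (conv_K1 b _ _ hN f g fun k hk => ⟨annul_ne (hf k hk), (hf k hk).2⟩)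
    intro m
    by_cases h : annul b q m
    · rw [if_pos h, if_pos (annul_ne h)]
    · simp [h]
  · rw [conv_comm, mul_comm (ltwo f)]
    refine le_trans (ltwo_mono ?_) (conv_K1 b _ _ hN g f fun k hk => ⟨annul_ne (hg k hk), (hg k hk).2⟩)
    intro m
    by_cases h : annul b q m
    · rw [if_pos h, if_pos (annul_ne h)]
    · simp [h]
  · refine le_trans (ltwo_mono ?_) (conv_K3 b _ _ hN f g ?_)
    · intro m
      by_cases h : annul b x m
      · rw [if_pos h, if_pos ⟨annul_ne h, h.2⟩]
      · simp [h]
    · by_contra h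
      exact annul_ne (hf 0 h) rfl

lemma dyadic_aux {q i j : ℤ} {x y z : ℝ} (hx : 3/4 * (2:ℝ) ^ q ≤ x) (h : x ≤ y + z)
    (hy : y ≤ 8/3 * (2:ℝ) ^ i) (hz : z ≤ 8/3 * (2:ℝ) ^ j) : q ≤ max i j + 2 := by
  by_contra hc
  have h1 : (2:ℝ) ^ (max i j + 3) ≤ 2 ^ q := zpow_le_zpow_right₀ (by norm_num) (by omega)
  have h2 : (2:ℝ) ^ i ≤ 2 ^ max i j := zpow_le_zpow_right₀ (by norm_num) (le_max_left _ _)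
  have h3 : (2:ℝ) ^ j ≤ 2 ^ max i j := zpow_le_zpow_right₀ (by norm_num) (le_max_right _ _)
  have h4 : (0:ℝ) < 2 ^ max i j := by positivity
  rw [zpow_add₀ (by norm_num)] at h1
  norm_num at h1
  linarith

lemma conv_block_sum (b : Fin d → ℝ) (hb : ∀ i, 0 < b i) (s : ℝ) :
    ∃ C : ℝ≥0∞, C < ⊤ ∧ ∀ (i j q : ℤ) (f g : Lat d → ℝ≥0∞),
      (∀ k, f k ≠ 0 → annul b i k) → (∀ k, g k ≠ 0 → annul b j k) →
      (2:ℝ≥0∞) ^ ((q:ℝ) * s) * ltwo (fun m => if annul b q m then conv f g m else 0)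
        ≤ C * ((2:ℝ≥0∞) ^ (((max i j : ℤ):ℝ) * s + ((min i j : ℤ):ℝ) * (1/2)) * (ltwo f * ltwo g)) *
          (if q - max i j ≤ 2 then (2:ℝ≥0∞) ^ (((q - max i j : ℤ) : ℝ) * (s + 1/2)) else 0) := by
  obtain ⟨K, hK, hblock⟩ := conv_blocks b hb
  refine ⟨K * 2 ^ (1:ℝ), ENNReal.mul_lt_top hK (two_rpow_lt_top _), ?_⟩
  intro i j q f g hf hg
  by_cases hz : ∃ m k, annul b q m ∧ annul b i k ∧ annul b j (m - k)
  swap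
  · have : (fun m => if annul b q m then conv f g m else 0) = fun _ => 0 := by
      ext m
      split_ifs with h
      · unfold conv
        rw [ENNReal.tsum_eq_zero]
        intro k
        split_ifs
        · by_contra h0
          push Not at hz
          exact hz m k h (hf k (left_ne_zero_of_mul h0)) (hg _ (right_ne_zero_of_mul h0))
        · rfl
      · rfl
    rw [this]
    simp [ltwo]
  obtain ⟨m, k, hm, hk, hl⟩ := hz
  have e1 : q ≤ max i j + 2 := by
    refine dyadic_aux hm.1 ?_ hk.2 hl.2
    simpa using freqNorm_add_le b k (m - k)
  have e2 : i ≤ max q j + 2 := by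
    refine dyadic_aux hk.1 ?_ hm.2 hl.2
    simpa using freqNorm_sub_le b m (m - k)
  have e3 : j ≤ max q i + 2 := by
    refine dyadic_aux hl.1 ?_ hm.2 hk.2
    exact freqNorm_sub_le b m k
  rw [if_pos (by omega)]
  have key : ∀ x : ℤ, (x = i ∨ x = j ∨ x = q) →
      ((q:ℝ) * s + (x:ℝ) * (1/2) ≤ 1 + (((max i j : ℤ):ℝ) * s + ((min i j : ℤ):ℝ) * (1/2))
        + ((q - max i j : ℤ) : ℝ) * (s + 1/2)) →
      (2:ℝ≥0∞) ^ ((q:ℝ) * s) * ltwo (fun m => if annul b q m then conv f g m else 0)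
        ≤ K * 2 ^ (1:ℝ) * ((2:ℝ≥0∞) ^ (((max i j : ℤ):ℝ) * s + ((min i j : ℤ):ℝ) * (1/2)) * (ltwo f * ltwo g)) *
          ((2:ℝ≥0∞) ^ (((q - max i j : ℤ) : ℝ) * (s + 1/2))) := by
    intro x hx hle
    have h1 := hblock i j q f g hf hg x hx
    have h2 := two_rpow_mono hle
    rw [two_rpow_add, two_rpow_add, two_rpow_add] at h2
    calc _ ≤ (2:ℝ≥0∞) ^ ((q:ℝ) * s) * (K * (2:ℝ≥0∞) ^ ((x:ℝ) * (1/2)) * (ltwo f * ltwo g)) := by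
          gcongr
      _ = K * ((2:ℝ≥0∞) ^ ((q:ℝ) * s) * (2:ℝ≥0∞) ^ ((x:ℝ) * (1/2))) * (ltwo f * ltwo g) := by ring
      _ ≤ K * (2 ^ (1:ℝ) * 2 ^ (((max i j : ℤ):ℝ) * s + ((min i j : ℤ):ℝ) * (1/2)) * 2 ^ (((q - max i j : ℤ) : ℝ) * (s + 1/2))) * (ltwo f * ltwo g) := by
          gcongr
      _ = _ := by ring
  by_cases hq : max i j - 2 ≤ q
  · refine key (min i j) ?_ ?_
    · rcases min_choice i j with h | h <;> simp [h]
    · have e1' : ((max i j : ℤ):ℝ) - 2 ≤ (q:ℝ) := by exact_mod_cast hq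
      push_cast at e1' ⊢
      nlinarith
  · refine key q (by simp) ?_
    have e4 : max i j ≤ min i j + 2 := by omega
    have e4' : ((max i j : ℤ):ℝ) ≤ ((min i j : ℤ):ℝ) + 2 := by exact_mod_cast e4
    push_cast at e4' ⊢
    nlinarith

lemma geom_int (δ : ℝ) (hδ : 0 < δ) :
    ∑' n : ℤ, (if n ≤ 2 then (2:ℝ≥0∞) ^ ((n:ℝ) * δ) else 0) < ⊤ := by
  rw [← (Equiv.subLeft (2:ℤ)).tsum_eq]
  simp only [Equiv.subLeft_apply]
  have hinj : Function.Injective (Nat.cast : ℕ → ℤ) := Nat.cast_injective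
  rw [← hinj.tsum_eq]
  swap
  · intro t ht
    have : 2 - t ≤ 2 := by
      by_contra h; simp at ht; omega
    exact ⟨t.toNat, by omega⟩
  have : ∀ n : ℕ, (if 2 - (n:ℤ) ≤ 2 then (2:ℝ≥0∞) ^ (((2 - (n:ℤ) : ℤ) : ℝ) * δ) else 0)
      = 2 ^ (2 * δ) * (2 ^ (-δ)) ^ n := by
    intro n
    rw [if_pos (by omega), ← ENNReal.rpow_natCast, ← ENNReal.rpow_mul, ← two_rpow_add]
    congr 1; push_cast; ring
  simp_rw [this]
  rw [ENNReal.tsum_mul_left, ENNReal.tsum_geometric]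
  refine ENNReal.mul_lt_top (two_rpow_lt_top _) ?_
  rw [ENNReal.inv_lt_top, tsub_pos_iff_lt]
  exact ENNReal.rpow_lt_one_of_one_lt_of_neg (by norm_num) (by linarith)

lemma conv_tsum (f g : ℤ → Lat d → ℝ≥0∞) (m : Lat d) :
    conv (fun k => ∑' i, f i k) (fun k => ∑' j, g j k) m = ∑' i, ∑' j, conv (f i) (g j) m := by
  unfold conv
  have : ∀ i, ∑' j, ∑' k, (if par k m then f i k * g j (m - k) else 0)
      = ∑' k, ∑' j, (if par k m then f i k * g j (m - k) else 0) := fun i => ENNReal.tsum_comm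
  simp_rw [this]
  rw [ENNReal.tsum_comm]
  congr 1; ext k
  split_ifs
  · simp_rw [ENNReal.tsum_mul_left, ENNReal.tsum_mul_right]
  · simp

lemma conv_main (b : Fin d → ℝ) (hb : ∀ i, 0 < b i) (s : ℝ) (hs : -(1/2) < s) :
    ∃ C : ℝ≥0∞, C < ⊤ ∧ ∀ (f g : ℤ → Lat d → ℝ≥0∞),
      (∀ i k, f i k ≠ 0 → annul b i k) → (∀ j k, g j k ≠ 0 → annul b j k) →
      ∑' q : ℤ, (2:ℝ≥0∞) ^ ((q:ℝ) * s) * ltwo (fun m => if annul b q m then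
          conv (fun k => ∑' i, f i k) (fun k => ∑' j, g j k) m else 0)
        ≤ C * ∑' i : ℤ, ∑' j : ℤ,
          (2:ℝ≥0∞) ^ (((max i j : ℤ):ℝ) * s + ((min i j : ℤ):ℝ) * (1/2)) *
            (ltwo (f i) * ltwo (g j)) := by
  obtain ⟨C, hC, hbl⟩ := conv_block_sum b hb s
  set G := ∑' n : ℤ, (if n ≤ 2 then (2:ℝ≥0∞) ^ ((n:ℝ) * (s + 1/2)) else 0) with hG
  refine ⟨C * G, ENNReal.mul_lt_top hC (geom_int _ (by linarith)), ?_⟩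
  intro f g hf hg
  calc _ ≤ ∑' q : ℤ, (2:ℝ≥0∞) ^ ((q:ℝ) * s) * ∑' i, ∑' j,
        ltwo (fun m => if annul b q m then conv (f i) (g j) m else 0) := by
        gcongr with q
        have : (fun m => if annul b q m then
            conv (fun k => ∑' i, f i k) (fun k => ∑' j, g j k) m else 0) =
            fun m => ∑' i, ∑' j, if annul b q m then conv (f i) (g j) m else 0 := by
          ext m
          split_ifs
          · exact conv_tsum f g m
          · simp
        rw [this]
        refine (ltwo_tsum _).trans ?_
        gcongr with i
        exact ltwo_tsum _
    _ = ∑' i, ∑' j, ∑' q : ℤ, (2:ℝ≥0∞) ^ ((q:ℝ) * s) *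
        ltwo (fun m => if annul b q m then conv (f i) (g j) m else 0) := by
        simp_rw [← ENNReal.tsum_mul_left]
        rw [ENNReal.tsum_comm]
        congr 1; ext i
        rw [ENNReal.tsum_comm]
    _ ≤ ∑' i, ∑' j, ∑' q : ℤ, C * ((2:ℝ≥0∞) ^ (((max i j : ℤ):ℝ) * s + ((min i j : ℤ):ℝ) * (1/2))
          * (ltwo (f i) * ltwo (g j))) *
          (if q - max i j ≤ 2 then (2:ℝ≥0∞) ^ (((q - max i j : ℤ) : ℝ) * (s + 1/2)) else 0) := by
        refine ENNReal.tsum_le_tsum fun i => ENNReal.tsum_le_tsum fun j =>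
          ENNReal.tsum_le_tsum fun q => ?_
        exact hbl i j q _ _ (hf i) (hg j)
    _ = ∑' i : ℤ, ∑' j : ℤ, C * ((2:ℝ≥0∞) ^ (((max i j : ℤ):ℝ) * s + ((min i j : ℤ):ℝ) * (1/2)) *
            (ltwo (f i) * ltwo (g j))) * G := by
        congr 1; ext i; congr 1; ext j
        rw [ENNReal.tsum_mul_left]
        congr 1
        exact (Equiv.subRight (max i j)).tsum_eq
          (fun n : ℤ => if n ≤ 2 then (2:ℝ≥0∞) ^ ((n:ℝ) * (s + 1/2)) else 0)
    _ = _ := by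
        simp_rw [ENNReal.tsum_mul_right, ENNReal.tsum_mul_left]
        ring


/-! ### Littlewood–Paley facts -/

section LP
variable [NormedAddCommGroup E] [NormedSpace ℝ E]

lemma bump_le_one {φ : ℝ → ℝ} (hφ : GoodBump φ) (ξ : ℝ) : φ ξ ≤ 1 := by
  by_cases h : ξ = 0
  · by_contra hc
    have := (hφ.2.2.1 ξ (by linarith)).1
    rw [h] at this; norm_num at this
  · have h1 := hφ.2.2.2 ξ h
    have h2 := le_hasSum h1 0 (fun j _ => hφ.2.1 _)
    simpa using h2

lemma blockW_nonneg {φ : ℝ → ℝ} (hφ : GoodBump φ) (b : Fin d → ℝ) (j : ℤ) (k : Lat d) :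
    0 ≤ blockW φ b j k := hφ.2.1 _

lemma blockW_supp {φ : ℝ → ℝ} (hφ : GoodBump φ) (b : Fin d → ℝ) (j : ℤ) (k : Lat d)
    (h : blockW φ b j k ≠ 0) : annul b j k := by
  have h1 := hφ.2.2.1 _ h
  have h2 : (0:ℝ) < 2 ^ j := by positivity
  rw [abs_of_nonneg (mul_nonneg (by positivity) (freqNorm_nonneg b k)), zpow_neg,
    inv_mul_eq_div, le_div_iff₀ h2, div_le_iff₀ h2] at h1
  exact h1

lemma blk_eq {φ : ℝ → ℝ} (hφ : GoodBump φ) (b : Fin d → ℝ) (j : ℤ) (c : Lat d → E) (k : Lat d) :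
    (‖blockOp φ b j c k‖₊ : ℝ≥0∞) = ENNReal.ofReal (blockW φ b j k) * (‖c k‖₊ : ℝ≥0∞) := by
  unfold blockOp
  rw [nnnorm_smul, ENNReal.coe_mul]
  congr 1
  rw [← enorm_eq_nnnorm, Real.enorm_eq_ofReal (blockW_nonneg hφ b j k)]

lemma blk_supp {φ : ℝ → ℝ} (hφ : GoodBump φ) (b : Fin d → ℝ) (j : ℤ) (c : Lat d → E) (k : Lat d)
    (h : (‖blockOp φ b j c k‖₊ : ℝ≥0∞) ≠ 0) : annul b j k := by
  rw [blk_eq hφ] at h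
  apply blockW_supp hφ
  intro h0
  rw [h0] at h
  simp at h

lemma blk_tsum {φ : ℝ → ℝ} (hφ : GoodBump φ) (b : Fin d → ℝ) (hb : ∀ i, 0 < b i)
    (c : Lat d → E) (k : Lat d) :
    ∑' j : ℤ, (‖blockOp φ b j c k‖₊ : ℝ≥0∞) = if k = 0 then 0 else (‖c k‖₊ : ℝ≥0∞) := by
  split_ifs with hk
  · rw [ENNReal.tsum_eq_zero]
    intro j
    by_contra h
    exact annul_ne (blk_supp hφ b j c k h) hk
  · simp_rw [blk_eq hφ]
    rw [ENNReal.tsum_mul_right]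
    have h1 := hφ.2.2.2 _ (freqNorm_pos b hb hk).ne'
    have h2 := ENNReal.ofReal_tsum_of_nonneg (fun j => blockW_nonneg hφ b j k) h1.summable
    rw [← h2]
    have h3 : ∑' j, blockW φ b j k = 1 := h1.tsum_eq
    rw [h3]; simp

lemma besovN_eq (φ : ℝ → ℝ) (b : Fin d → ℝ) (s : ℝ) (c : Lat d → E) :
    besovN φ b s 1 c = (‖c 0‖₊ : ℝ≥0∞) + ∑' j : ℤ, (2:ℝ≥0∞) ^ ((j:ℝ) * s) *
      ltwo (fun k => (‖blockOp φ b j c k‖₊ : ℝ≥0∞)) := by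
  unfold besovN
  rw [lr_one_option]
  rfl

lemma hsN_eq (b : Fin d → ℝ) (hb : ∀ i, 0 < b i) (s : ℝ) (c : Lat d → E) :
    hsN b s c = ltwo (fun k => if k = 0 then (‖c 0‖₊ : ℝ≥0∞) else
      ENNReal.ofReal (freqNorm b k ^ s) * (‖c k‖₊ : ℝ≥0∞)) := by
  unfold hsN ltwo
  congr 1
  conv_rhs => rw [ENNReal.tsum_eq_add_tsum_ite 0]
  congr 1
  · simp
  · congr 1; ext k
    split_ifs with h
    · rfl
    · simp only [h, if_false]
      rw [mul_pow, ← ENNReal.ofReal_pow (Real.rpow_nonneg (freqNorm_nonneg b k) _), mul_comm 2 s,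
        Real.rpow_mul (freqNorm_nonneg b k)]
      norm_cast

lemma freq_rpow_le (b : Fin d → ℝ) (s : ℝ) (q : ℤ) (k : Lat d) (h : annul b q k) :
    ENNReal.ofReal (freqNorm b k ^ s) ≤
      ENNReal.ofReal ((8/3) ^ s + (3/4) ^ s) * (2:ℝ≥0∞) ^ ((q:ℝ) * s) := by
  have h2 : (0:ℝ) < 2 ^ q := by positivity
  have e : (2:ℝ≥0∞) ^ ((q:ℝ) * s) = ENNReal.ofReal (((2:ℝ) ^ q) ^ s) := by
    rw [ENNReal.rpow_mul, ← ofReal_two_zpow, ENNReal.ofReal_rpow_of_pos h2]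
  rw [e, ← ENNReal.ofReal_mul (by positivity)]
  apply ENNReal.ofReal_le_ofReal
  set t := freqNorm b k / 2 ^ q with ht
  have h3 : freqNorm b k = t * 2 ^ q := by rw [ht]; field_simp
  have h4 : 3/4 ≤ t := by rw [ht, le_div_iff₀ h2]; exact h.1
  have h5 : t ≤ 8/3 := by rw [ht, div_le_iff₀ h2]; exact h.2
  rw [h3, Real.mul_rpow (by linarith) h2.le]
  gcongr
  have p1 : (0:ℝ) < (8/3) ^ s := by positivity
  have p2 : (0:ℝ) < (3/4) ^ s := by positivity
  rcases le_total 0 s with hs | hs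
  · have := Real.rpow_le_rpow (by linarith) h5 hs
    linarith
  · have := Real.rpow_le_rpow_of_nonpos (by norm_num) h4 hs
    linarith

lemma hs_le_besov {φ : ℝ → ℝ} (hφ : GoodBump φ) (b : Fin d → ℝ) (hb : ∀ i, 0 < b i) (s : ℝ) :
    ∃ C : ℝ≥0∞, C < ⊤ ∧ ∀ c : Lat d → E, c 0 = 0 → hsN b s c ≤ C * besovN φ b s 1 c := by
  refine ⟨ENNReal.ofReal ((8/3) ^ s + (3/4) ^ s), ENNReal.ofReal_lt_top, fun c hc => ?_⟩
  rw [hsN_eq b hb, besovN_eq]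
  have : (fun k => if k = 0 then (‖c 0‖₊ : ℝ≥0∞) else
      ENNReal.ofReal (freqNorm b k ^ s) * (‖c k‖₊ : ℝ≥0∞)) =
      fun k => ∑' j : ℤ, ENNReal.ofReal (freqNorm b k ^ s) * (‖blockOp φ b j c k‖₊ : ℝ≥0∞) := by
    ext k
    rw [ENNReal.tsum_mul_left, blk_tsum hφ b hb]
    split_ifs
    · simp [hc]
    · rfl
  rw [this]
  refine (ltwo_tsum _).trans ?_
  rw [mul_add, ← ENNReal.tsum_mul_left]
  refine le_trans ?_ le_add_self
  refine ENNReal.tsum_le_tsum fun j => ?_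
  rw [← mul_assoc, ← ltwo_const_mul]
  refine ltwo_mono fun k => ?_
  by_cases h : (‖blockOp φ b j c k‖₊ : ℝ≥0∞) = 0
  · simp [h]
  · gcongr
    exact freq_rpow_le b s j k (blk_supp hφ b j c k h)

end LP

/-! ### pointwise bounds -/

lemma enorm_tsum_le' {α : Type*} (f : α → ℂ) :
    (‖∑' k, f k‖₊ : ℝ≥0∞) ≤ ∑' k, (‖f k‖₊ : ℝ≥0∞) := by
  by_cases h : Summable (fun k => ‖f k‖₊)
  · rw [← ENNReal.coe_tsum h]
    exact_mod_cast nnnorm_tsum_le h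
  · rw [ENNReal.tsum_coe_eq_top_iff_not_summable_coe.2 ]
    · exact le_top
    · exact fun h' => h (NNReal.summable_coe.1 h')

lemma abs_freq_div_le (b : Fin d → ℝ) (k : Lat d) (i : Fin d) :
    |freq b k i / freqNorm b k| ≤ 1 := by
  rw [abs_div, abs_of_nonneg (freqNorm_nonneg b k)]
  exact div_le_one_of_le₀ (abs_freq_le b k i) (freqNorm_nonneg b k)

lemma one_le_sqrt2 : (1:ℝ) ≤ Real.sqrt 2 := Real.one_le_sqrt.2 (by norm_num)

lemma div_sqrt2_le (z : ℂ) : ‖z / ((Real.sqrt 2 : ℝ) : ℂ)‖ ≤ ‖z‖ := by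
  rw [norm_div, Complex.norm_real, Real.norm_of_nonneg (Real.sqrt_nonneg _)]
  exact div_le_self (norm_nonneg _) one_le_sqrt2

lemma fromEig_le (b : Fin d → ℝ) (Ec : ℝ → Lat d → ℂ) (m : Lat d) :
    (‖pairC (fromEig b Ec) m‖₊ : ℝ≥0∞) ≤ (‖Ec 1 m‖₊ : ℝ≥0∞) + (‖Ec (-1) m‖₊ : ℝ≥0∞) := by
  have : ‖pairC (fromEig b Ec) m‖ ≤ ‖Ec 1 m‖ + ‖Ec (-1) m‖ := by
    unfold pairC
    rw [Prod.norm_mk, max_le_iff]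
    constructor
    · exact (div_sqrt2_le _).trans (norm_add_le _ _)
    · rw [pi_norm_le_iff_of_nonneg (by positivity)]
      intro i
      refine (div_sqrt2_le _).trans ?_
      rw [norm_mul, norm_neg, Complex.norm_real, Real.norm_eq_abs, abs_mul, abs_sg, one_mul]
      calc _ ≤ 1 * ‖Ec 1 m - Ec (-1) m‖ := by gcongr; exact abs_freq_div_le b m i
        _ ≤ _ := by rw [one_mul]; exact norm_sub_le _ _
  exact_mod_cast this

lemma eig_le (b : Fin d → ℝ) (A : PairF d) (α : ℝ) (hα : |α| = 1) (k : Lat d) :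
    (‖eig b A α k‖₊ : ℝ≥0∞) ≤ (1 + d : ℕ) * (‖pairC A k‖₊ : ℝ≥0∞) := by
  have : ‖eig b A α k‖ ≤ (1 + d : ℕ) * ‖pairC A k‖ := by
    unfold eig
    refine (div_sqrt2_le _).trans ((norm_sub_le _ _).trans ?_)
    have h1 : ‖A.1 k‖ ≤ ‖pairC A k‖ := norm_fst_le (pairC A k)
    have h2 : ∀ i, ‖A.2 k i‖ ≤ ‖pairC A k‖ := fun i =>
      (norm_le_pi_norm (A.2 k) i).trans (norm_snd_le (pairC A k))
    have h3 : ‖∑ i, ((freq b k i / freqNorm b k : ℝ) : ℂ) * A.2 k i‖ ≤ d * ‖pairC A k‖ := by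
      refine (norm_sum_le _ _).trans ?_
      calc _ ≤ ∑ i : Fin d, ‖pairC A k‖ := by
            refine Finset.sum_le_sum fun i _ => ?_
            rw [norm_mul, Complex.norm_real, Real.norm_eq_abs]
            calc _ ≤ 1 * ‖A.2 k i‖ := by gcongr; exact abs_freq_div_le b k i
              _ ≤ _ := by rw [one_mul]; exact h2 i
        _ = _ := by simp
    rw [norm_mul, Complex.norm_real, Real.norm_eq_abs, abs_mul, abs_sg, hα]
    rw [Nat.cast_add, Nat.cast_one]
    linarith
  have h := ENNReal.ofReal_le_ofReal this
  rw [ENNReal.ofReal_mul (by positivity), ENNReal.ofReal_natCast, ofReal_norm, ofReal_norm] at h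
  exact h

lemma enorm_ofReal' (x : ℝ) : (‖(x : ℂ)‖₊ : ℝ≥0∞) = ENNReal.ofReal |x| := by
  rw [← enorm_eq_nnnorm, ← ofReal_norm, Complex.norm_real, Real.norm_eq_abs]

lemma Q2_coord_le (b : Fin d → ℝ) (hb : ∀ i, 0 < b i) (κ : ℝ) (A B : PairF d) (γ : ℝ)
    (hγ : |γ| = 1) (m : Lat d) :
    (‖(-Complex.I) * (((Real.sqrt (2 * vol b))⁻¹ : ℝ) : ℂ) * (((κ + 3) / 4 : ℝ) : ℂ) *
        ((γ * sg m * freqNorm b m : ℝ) : ℂ) *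
        ∑' k : Lat d,
          (if k ≠ 0 ∧ m - k ≠ 0 ∧
              sg k * freqNorm b k + sg (m - k) * freqNorm b (m - k)
                = γ * sg m * freqNorm b m then
            eig b A γ k * eig b B γ (m - k)
          else 0)‖₊ : ℝ≥0∞) ≤
      ENNReal.ofReal |(Real.sqrt (2 * vol b))⁻¹| * ENNReal.ofReal |(κ + 3) / 4| * (1 + d : ℕ) ^ 2 *
        (ENNReal.ofReal (freqNorm b m) *
        conv (fun k => if k = 0 then 0 else (‖pairC A k‖₊ : ℝ≥0∞))
          (fun k => if k = 0 then 0 else (‖pairC B k‖₊ : ℝ≥0∞)) m) := by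
  rw [nnnorm_mul, nnnorm_mul, nnnorm_mul, nnnorm_mul]
  simp only [ENNReal.coe_mul, enorm_ofReal', abs_mul, hγ, abs_sg, one_mul,
    abs_of_nonneg (freqNorm_nonneg b m), nnnorm_neg, Complex.nnnorm_I]
  have h : (‖∑' k : Lat d,
          (if k ≠ 0 ∧ m - k ≠ 0 ∧
              sg k * freqNorm b k + sg (m - k) * freqNorm b (m - k)
                = γ * sg m * freqNorm b m then
            eig b A γ k * eig b B γ (m - k)
          else 0)‖₊ : ℝ≥0∞) ≤ (1 + d : ℕ) ^ 2 *
        conv (fun k => if k = 0 then 0 else (‖pairC A k‖₊ : ℝ≥0∞))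
          (fun k => if k = 0 then 0 else (‖pairC B k‖₊ : ℝ≥0∞)) m := by
    refine (enorm_tsum_le' _).trans ?_
    unfold conv
    rw [← ENNReal.tsum_mul_left]
    refine ENNReal.tsum_le_tsum fun k => ?_
    by_cases h1 : k ≠ 0 ∧ m - k ≠ 0 ∧
              sg k * freqNorm b k + sg (m - k) * freqNorm b (m - k)
                = γ * sg m * freqNorm b m
    · have hp := par_of_res b hb γ (by rw [← sq_abs, hγ]; norm_num) k m h1.2.2
      rw [if_pos h1, if_pos hp]
      beta_reduce
      rw [if_neg h1.1, if_neg h1.2.1, nnnorm_mul, ENNReal.coe_mul]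
      refine (mul_le_mul' (eig_le b A γ hγ k) (eig_le b B γ hγ (m - k))).trans (le_of_eq ?_)
      ring
    · rw [if_neg h1]; simp
  refine (mul_le_mul' le_rfl h).trans (le_of_eq ?_)
  ring

lemma Q2_pt (b : Fin d → ℝ) (hb : ∀ i, 0 < b i) (κ : ℝ) :
    ∃ C : ℝ≥0∞, C < ⊤ ∧ ∀ (A B : PairF d) (m : Lat d),
      (‖pairC (Q2res b κ A B) m‖₊ : ℝ≥0∞) ≤ C * (ENNReal.ofReal (freqNorm b m) *
        conv (fun k => if k = 0 then 0 else (‖pairC A k‖₊ : ℝ≥0∞))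
          (fun k => if k = 0 then 0 else (‖pairC B k‖₊ : ℝ≥0∞)) m) := by
  refine ⟨2 * (ENNReal.ofReal |(Real.sqrt (2 * vol b))⁻¹| * ENNReal.ofReal |(κ + 3) / 4| *
    (1 + d : ℕ) ^ 2), ?_, fun A B m => ?_⟩
  · finiteness
  refine (fromEig_le b _ m).trans ?_
  by_cases hm : m = 0
  · simp [hm]
  simp only [hm, if_false]
  exact (add_le_add (Q2_coord_le b hb κ A B 1 (by norm_num) m)
    (Q2_coord_le b hb κ A B (-1) (by norm_num) m)).trans (le_of_eq (by ring))

lemma Q2_zero (b : Fin d → ℝ) (κ : ℝ) (A B : PairF d) : pairC (Q2res b κ A B) 0 = 0 := by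
  unfold pairC Q2res fromEig
  simp
  rfl

lemma Q2_besov {φ : ℝ → ℝ} (hφ : GoodBump φ) (b : Fin d → ℝ) (hb : ∀ i, 0 < b i) (κ : ℝ)
    (s : ℝ) (hs : -(1/2) < s) :
    ∃ C : ℝ≥0∞, C < ⊤ ∧ ∀ (A B : PairF d),
      besovN φ b (s - 1) 1 (pairC (Q2res b κ A B)) ≤ C * ∑' i : ℤ, ∑' j : ℤ,
          (2:ℝ≥0∞) ^ (((max i j : ℤ):ℝ) * s + ((min i j : ℤ):ℝ) * (1/2)) *
            (ltwo (fun k => (‖blockOp φ b i (pairC A) k‖₊ : ℝ≥0∞)) *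
              ltwo (fun k => (‖blockOp φ b j (pairC B) k‖₊ : ℝ≥0∞))) := by
  obtain ⟨C1, hC1, h1⟩ := Q2_pt b hb κ
  obtain ⟨C2, hC2, h2⟩ := conv_main b hb s hs
  refine ⟨C1 * ENNReal.ofReal (8/3) * C2, by finiteness, fun A B => ?_⟩
  have h3 := h2 (fun i k => (‖blockOp φ b i (pairC A) k‖₊ : ℝ≥0∞))
    (fun i k => (‖blockOp φ b i (pairC B) k‖₊ : ℝ≥0∞))
    (fun i k => blk_supp hφ b i _ k) (fun i k => blk_supp hφ b i _ k)
  simp only [blk_tsum hφ b hb] at h3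
  rw [besovN_eq, Q2_zero, mul_assoc (C1 * _)]
  refine le_trans ?_ (mul_le_mul' le_rfl h3)
  rw [nnnorm_zero, ENNReal.coe_zero, zero_add, ← ENNReal.tsum_mul_left]
  refine ENNReal.tsum_le_tsum fun q => ?_
  have e : (2:ℝ≥0∞) ^ ((q:ℝ) * s) = (2:ℝ≥0∞) ^ ((q:ℝ) * (s - 1)) * ENNReal.ofReal (2 ^ q) := by
    rw [ofReal_two_zpow, ← two_rpow_add]; congr 1; ring
  suffices key : ltwo (fun k => (‖blockOp φ b q (pairC (Q2res b κ A B)) k‖₊ : ℝ≥0∞)) ≤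
      C1 * ENNReal.ofReal (8/3) * ENNReal.ofReal (2 ^ q) *
        ltwo (fun m => if annul b q m then
          conv (fun k => if k = 0 then 0 else (‖pairC A k‖₊ : ℝ≥0∞))
          (fun k => if k = 0 then 0 else (‖pairC B k‖₊ : ℝ≥0∞)) m else 0) by
    refine (mul_le_mul' le_rfl key).trans (le_of_eq ?_)
    rw [e]; ring
  rw [← ltwo_const_mul]
  refine ltwo_mono fun m => ?_
  by_cases h : (‖blockOp φ b q (pairC (Q2res b κ A B)) m‖₊ : ℝ≥0∞) = 0
  · rw [h]; exact zero_le
  have ha := blk_supp hφ b q _ m h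
  rw [if_pos ha, blk_eq hφ]
  have h4 : ENNReal.ofReal (blockW φ b q m) ≤ 1 := by
    rw [← ENNReal.ofReal_one]; exact ENNReal.ofReal_le_ofReal (bump_le_one hφ _)
  have h5 : ENNReal.ofReal (freqNorm b m) ≤ ENNReal.ofReal (8/3) * ENNReal.ofReal (2 ^ q) := by
    rw [← ENNReal.ofReal_mul (by norm_num)]; exact ENNReal.ofReal_le_ofReal ha.2
  refine (mul_le_mul' h4 ((h1 A B m).trans (mul_le_mul' le_rfl (mul_le_mul' h5 le_rfl)))).trans
    (le_of_eq ?_)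
  ring


/-! ### double sums -/

lemma dsum_le (w : ℤ → ℤ → ℝ≥0∞) (x y α β : ℤ → ℝ≥0∞) (K : ℝ≥0∞)
    (h : ∀ i j, α i ≠ 0 → β j ≠ 0 → w i j ≤ K * (x i * y j)) :
    ∑' i, ∑' j, w i j * (α i * β j) ≤ K * ((∑' i, x i * α i) * ∑' j, y j * β j) := by
  rw [← ENNReal.tsum_mul_right, ← ENNReal.tsum_mul_left]
  refine ENNReal.tsum_le_tsum fun i => ?_
  rw [← ENNReal.tsum_mul_left, ← ENNReal.tsum_mul_left]
  refine ENNReal.tsum_le_tsum fun j => ?_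
  by_cases h1 : α i = 0
  · simp [h1]
  by_cases h2 : β j = 0
  · simp [h2]
  refine (mul_le_mul' (h i j h1 h2) le_rfl).trans (le_of_eq ?_)
  ring

lemma sum_le_besov [NormedAddCommGroup E] [NormedSpace ℝ E] (φ : ℝ → ℝ) (b : Fin d → ℝ) (s : ℝ)
    (c : Lat d → E) : ∑' j : ℤ, (2:ℝ≥0∞) ^ ((j:ℝ) * s) *
      ltwo (fun k => (‖blockOp φ b j c k‖₊ : ℝ≥0∞)) ≤ besovN φ b s 1 c := by
  rw [besovN_eq]; exact le_add_self

lemma max_min_cases (i j : ℤ) (P : ℝ → ℝ → Prop) (h1 : (i:ℝ) ≤ j → P j i) (h2 : (j:ℝ) ≤ i → P i j) :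
    P ((max i j : ℤ):ℝ) ((min i j : ℤ):ℝ) := by
  rcases le_total i j with h | h
  · rw [max_eq_right h, min_eq_left h]; exact h1 (by exact_mod_cast h)
  · rw [max_eq_left h, min_eq_right h]; exact h2 (by exact_mod_cast h)

lemma freq_lower (b : Fin d → ℝ) (hb : ∀ i, 0 < b i) :
    ∃ c : ℝ, 0 < c ∧ ∀ k : Lat d, k ≠ 0 → c ≤ freqNorm b k := by
  have hs : 0 ≤ ∑ i, b i := Finset.sum_nonneg fun i _ => (hb i).le
  refine ⟨1 / (∑ i, b i + 1), by positivity, fun k hk => ?_⟩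
  obtain ⟨i, hi⟩ := Function.ne_iff.1 hk
  have h1 : (1:ℝ) ≤ |(k i : ℝ)| := by
    have : (1:ℤ) ≤ |k i| := Int.one_le_abs hi
    exact_mod_cast this
  refine le_trans ?_ (abs_freq_le b k i)
  unfold freq
  rw [abs_div, abs_of_pos (hb i)]
  have h2 : b i ≤ ∑ i, b i + 1 := by
    have := Finset.single_le_sum (f := b) (fun i _ => (hb i).le) (Finset.mem_univ i)
    linarith
  exact div_le_div₀ (by linarith) h1 (hb i) h2

lemma blk_lower {φ : ℝ → ℝ} (hφ : GoodBump φ) (b : Fin d → ℝ) (hb : ∀ i, 0 < b i) :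
    ∃ J : ℝ, 0 ≤ J ∧ ∀ (A : PairF d) (i : ℤ),
      ltwo (fun k => (‖blockOp φ b i (pairC A) k‖₊ : ℝ≥0∞)) ≠ 0 → -J ≤ (i:ℝ) := by
  obtain ⟨c, hc, h⟩ := freq_lower b hb
  obtain ⟨n, hn⟩ := exists_pow_lt_of_lt_one (show 0 < c / (8/3) by positivity)
    (show (1/2:ℝ) < 1 by norm_num)
  refine ⟨n, by positivity, fun A i hi => ?_⟩
  have h1 : ∃ k, (‖blockOp φ b i (pairC A) k‖₊ : ℝ≥0∞) ≠ 0 := by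
    by_contra hcon
    push Not at hcon
    apply hi
    simp only [ltwo, hcon]
    simp
  obtain ⟨k, hk⟩ := h1
  have h2 := blk_supp hφ b i _ k hk
  have h3 := h k (annul_ne h2)
  by_contra h4
  push Not at h4
  have h5 : i ≤ -(n:ℤ) := by
    have : i < -(n:ℤ) := by exact_mod_cast h4
    exact this.le
  have h6 : (2:ℝ) ^ i ≤ 2 ^ (-(n:ℤ)) := zpow_le_zpow_right₀ (by norm_num) h5
  have h7 : (2:ℝ) ^ (-(n:ℤ)) = (1/2) ^ n := by
    rw [zpow_neg, zpow_natCast, one_div, inv_pow]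
  rw [lt_div_iff₀ (by norm_num)] at hn
  have := h2.2
  rw [h7] at h6
  linarith

/-! ### the operator `𝒬₁` -/

lemma ltwo_shift (f : Lat d → ℝ≥0∞) (l : Lat d) : ltwo (fun m => f (m - l)) = ltwo f := by
  unfold ltwo
  rw [← Equiv.tsum_eq (Equiv.subRight l) (fun k => f k ^ 2)]
  rfl

lemma dot_v_le (b : Fin d → ℝ) (k : Lat d) (v : Fin d → ℂ) :
    ‖∑ i, (freq b k i : ℂ) * v i‖ ≤ d * (freqNorm b k * ‖v‖) := by
  refine (norm_sum_le _ _).trans ?_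
  calc _ ≤ ∑ i : Fin d, freqNorm b k * ‖v‖ := by
        refine Finset.sum_le_sum fun i _ => ?_
        rw [norm_mul, Complex.norm_real, Real.norm_eq_abs]
        exact mul_le_mul (abs_freq_le b k i) (norm_le_pi_norm v i) (norm_nonneg _)
          (freqNorm_nonneg b k)
    _ = _ := by simp

lemma dot_k_le (b : Fin d → ℝ) (k m : Lat d) :
    |(∑ i, freq b k i * freq b m i) / (freqNorm b k * freqNorm b m)| ≤ d := by
  have hp : 0 ≤ freqNorm b k * freqNorm b m := mul_nonneg (freqNorm_nonneg b k) (freqNorm_nonneg b m)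
  rw [abs_div, abs_of_nonneg hp]
  refine div_le_of_le_mul₀ hp (by positivity) ?_
  refine (Finset.abs_sum_le_sum_abs _ _).trans ?_
  calc _ ≤ ∑ i : Fin d, freqNorm b k * freqNorm b m := by
        refine Finset.sum_le_sum fun i _ => ?_
        rw [abs_mul]
        exact mul_le_mul (abs_freq_le b k i) (abs_freq_le b m i) (abs_nonneg _)
          (freqNorm_nonneg b k)
    _ = _ := by simp

/-- the majorant of a single resonant interaction in `𝒬₁`. -/
def q1term (b : Fin d → ℝ) (u : VF d) (A : PairF d) (m k : Lat d) : ℝ≥0∞ :=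
  if k ≠ 0 ∧ freqNorm b k = freqNorm b m then
    ENNReal.ofReal (freqNorm b k) * (‖pairC A k‖₊ : ℝ≥0∞) * (‖u (m - k)‖₊ : ℝ≥0∞) else 0

lemma q1_one (b : Fin d → ℝ) (u : VF d) (A : PairF d) (γ α : ℝ) (hγ : |γ| = 1) (hα : |α| = 1)
    (m k : Lat d) :
    (‖(if k ≠ 0 ∧ α * sg k * freqNorm b k = γ * sg m * freqNorm b m then
            eig b A α k * (∑ i, (freq b k i : ℂ) * u (m - k) i) *
              (((∑ i, freq b k i * freq b m i) / (freqNorm b k * freqNorm b m) : ℝ) : ℂ)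
          else 0)‖₊ : ℝ≥0∞) ≤ (1 + d : ℕ) * d * d * q1term b u A m k := by
  by_cases h : k ≠ 0 ∧ α * sg k * freqNorm b k = γ * sg m * freqNorm b m
  · have hkm : freqNorm b k = freqNorm b m := by
      have := congrArg abs h.2
      simpa [abs_mul, hγ, hα, abs_sg, abs_of_nonneg (freqNorm_nonneg b _)] using this
    rw [if_pos h, q1term, if_pos ⟨h.1, hkm⟩, nnnorm_mul, nnnorm_mul, ENNReal.coe_mul,
      ENNReal.coe_mul]
    have e1 := eig_le b A α hα k
    have e2 : (‖∑ i, (freq b k i : ℂ) * u (m - k) i‖₊ : ℝ≥0∞) ≤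
        d * (ENNReal.ofReal (freqNorm b k) * (‖u (m - k)‖₊ : ℝ≥0∞)) := by
      have h := ENNReal.ofReal_le_ofReal (dot_v_le b k (u (m - k)))
      rw [ENNReal.ofReal_mul (by positivity), ENNReal.ofReal_mul (freqNorm_nonneg b k),
        ENNReal.ofReal_natCast, ofReal_norm, ofReal_norm] at h
      exact h
    have e3 : (‖(((∑ i, freq b k i * freq b m i) / (freqNorm b k * freqNorm b m) : ℝ) : ℂ)‖₊ :
        ℝ≥0∞) ≤ d := by
      rw [enorm_ofReal', ← ENNReal.ofReal_natCast]
      exact ENNReal.ofReal_le_ofReal (dot_k_le b k m)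
    refine (mul_le_mul' (mul_le_mul' e1 e2) e3).trans (le_of_eq ?_)
    ring
  · rw [if_neg h]; simp

lemma Q1_pt (b : Fin d → ℝ) :
    ∃ C : ℝ≥0∞, C < ⊤ ∧ ∀ (u : VF d) (A : PairF d) (m : Lat d), 
      (‖pairC (Q1res b u A) m‖₊ : ℝ≥0∞) ≤ if m = 0 then 0 else C * ∑' k, q1term b u A m k := by
  refine ⟨4 * ((‖Complex.I / ((Real.sqrt (vol b) : ℝ) : ℂ)‖₊ : ℝ≥0∞) * ((1 + d : ℕ) * d * d)), ?_,
    fun u A m => ?_⟩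
  · exact ENNReal.mul_lt_top (by norm_num) (ENNReal.mul_lt_top ENNReal.coe_lt_top (by finiteness))
  refine (fromEig_le b _ m).trans ?_
  by_cases hm : m = 0
  · simp [hm]
  simp only [hm, if_false]
  have key : ∀ γ : ℝ, |γ| = 1 → (‖(Complex.I / ((Real.sqrt (vol b) : ℝ) : ℂ)) *
        ∑' k : Lat d, ∑ α : Bool,
          (if k ≠ 0 ∧
              (if α then (1:ℝ) else -1) * sg k * freqNorm b k = γ * sg m * freqNorm b m then
            eig b A (if α then (1:ℝ) else -1) k *
              (∑ i, (freq b k i : ℂ) * u (m - k) i) *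
              (((∑ i, freq b k i * freq b m i) / (freqNorm b k * freqNorm b m) : ℝ) : ℂ)
          else 0)‖₊ : ℝ≥0∞) ≤ 2 * ((‖Complex.I / ((Real.sqrt (vol b) : ℝ) : ℂ)‖₊ : ℝ≥0∞) *
            ((1 + d : ℕ) * d * d)) * ∑' k, q1term b u A m k := by
    intro γ hγ
    rw [nnnorm_mul, ENNReal.coe_mul]
    have h2 : ∀ (X Y Z : ℝ≥0∞), 2 * (X * Y) * Z = X * (2 * Y * Z) := fun X Y Z => by ring
    rw [h2]
    refine mul_le_mul' le_rfl ((enorm_tsum_le' _).trans ?_)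
    rw [← ENNReal.tsum_mul_left]
    refine ENNReal.tsum_le_tsum fun k => ?_
    rw [Fintype.sum_bool]
    have t := q1_one b u A γ 1 hγ (by norm_num) m k
    have f := q1_one b u A γ (-1) hγ (by norm_num) m k
    have h3 : ∀ (x y : ℂ), (‖x + y‖₊ : ℝ≥0∞) ≤ (‖x‖₊ : ℝ≥0∞) + (‖y‖₊ : ℝ≥0∞) := fun x y => by
      exact_mod_cast nnnorm_add_le x y
    refine (h3 _ _).trans ?_
    simp only [if_true, Bool.false_eq_true, if_false]
    exact (add_le_add t f).trans (le_of_eq (by ring))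
  exact (add_le_add (key 1 (by norm_num)) (key (-1) (by norm_num))).trans (le_of_eq (by ring))

lemma rpow_res {σ γ t r : ℝ} (hγ : 0 ≤ γ) (ht : 0 < t) (hr : 0 < r) (h : r ≤ 2 * t) :
    t ^ (σ - 1) * t ≤ 2 ^ γ * (r ^ (-γ) * t ^ (σ + γ)) := by
  have h1 : t ^ (σ - 1) * t = t ^ σ := by
    rw [← Real.rpow_add_one ht.ne']; congr 1; ring
  have h2 : r ^ γ ≤ 2 ^ γ * t ^ γ := by
    rw [← Real.mul_rpow (by norm_num) ht.le]; exact Real.rpow_le_rpow hr.le h hγ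
  have h3 : r ^ (-γ) * r ^ γ = 1 := by rw [← Real.rpow_add hr]; simp
  rw [h1, Real.rpow_add ht]
  have p1 : 0 < r ^ (-γ) := by positivity
  have p2 : 0 < t ^ σ := by positivity
  calc t ^ σ = (r ^ (-γ) * r ^ γ) * t ^ σ := by rw [h3, one_mul]
    _ ≤ (r ^ (-γ) * (2 ^ γ * t ^ γ)) * t ^ σ := by gcongr
    _ = _ := by ring

lemma Q1_hs (b : Fin d → ℝ) (hb : ∀ i, 0 < b i) (σ γ : ℝ) (hγ : 0 ≤ γ) :
    ∃ C : ℝ≥0∞, C < ⊤ ∧ ∀ (u : VF d) (A : PairF d),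
      hsN b (σ - 1) (pairC (Q1res b u A)) ≤
            C * (hsN b (σ + γ) (pairC A) *
                (∑' k : Lat d, if k = 0 then 0
                  else ENNReal.ofReal (freqNorm b k ^ (-γ)) * (‖u k‖₊ : ℝ≥0∞))
              + (‖u 0‖₊ : ℝ≥0∞) * hsN b σ (pairC A)) := by
  obtain ⟨C, hC, h⟩ := Q1_pt b
  refine ⟨C * (1 + ENNReal.ofReal (2 ^ γ)), by finiteness, fun u A => ?_⟩
  rw [hsN_eq b hb, hsN_eq b hb, hsN_eq b hb]
  set H : ℝ → Lat d → ℝ≥0∞ := fun s k => if k = 0 then (‖pairC A 0‖₊ : ℝ≥0∞) else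
      ENNReal.ofReal (freqNorm b k ^ s) * (‖pairC A k‖₊ : ℝ≥0∞) with hH
  set w : Lat d → ℝ≥0∞ := fun l => if l = 0 then 0
    else ENNReal.ofReal (freqNorm b l ^ (-γ)) * (‖u l‖₊ : ℝ≥0∞) with hw
  set G : Lat d → Lat d → ℝ≥0∞ := fun l k => if l = 0 then (‖u 0‖₊ : ℝ≥0∞) * H σ k else
    ENNReal.ofReal (2 ^ γ) * w l * H (σ + γ) k with hG
  have step1 : ltwo (fun k => if k = 0 then (‖pairC (Q1res b u A) 0‖₊ : ℝ≥0∞) else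
      ENNReal.ofReal (freqNorm b k ^ (σ - 1)) * (‖pairC (Q1res b u A) k‖₊ : ℝ≥0∞)) ≤
      ltwo (fun m => C * ∑' l, G l (m - l)) := by
    refine ltwo_mono fun m => ?_
    beta_reduce
    have hm' := h u A m
    by_cases hm : m = 0
    · subst hm
      rw [if_pos rfl] at hm' ⊢
      exact hm'.trans zero_le
    rw [if_neg hm] at hm' ⊢
    refine (mul_le_mul' le_rfl hm').trans ?_
    rw [mul_left_comm, ← ENNReal.tsum_mul_left]
    refine mul_le_mul' le_rfl ?_
    rw [← Equiv.tsum_eq (Equiv.subLeft m)]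
    refine ENNReal.tsum_le_tsum fun l => ?_
    rw [Equiv.subLeft_apply]
    unfold q1term
    by_cases hc : m - l ≠ 0 ∧ freqNorm b (m - l) = freqNorm b m
    · rw [if_pos hc, sub_sub_cancel]
      have ht := freqNorm_pos b hb hc.1
      have e : ∀ s, H s (m - l) =
          ENNReal.ofReal (freqNorm b (m - l) ^ s) * (‖pairC A (m - l)‖₊ : ℝ≥0∞) := fun s => by
        rw [hH]; beta_reduce; rw [if_neg hc.1]
      rw [hG]; beta_reduce
      rw [e, e, ← hc.2]
      by_cases hl : l = 0
      · rw [if_pos hl]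
        have h1 : ENNReal.ofReal (freqNorm b (m - l) ^ σ) =
            ENNReal.ofReal (freqNorm b (m - l) ^ (σ - 1)) * ENNReal.ofReal (freqNorm b (m - l)) := by
          rw [← ENNReal.ofReal_mul (by positivity), ← Real.rpow_add_one ht.ne']
          congr 2; ring
        rw [h1, hl]
        exact le_of_eq (by ring)
      · rw [if_neg hl, hw]; beta_reduce; rw [if_neg hl]
        have hr := freqNorm_pos b hb hl
        have h2 : freqNorm b l ≤ 2 * freqNorm b (m - l) := by
          have := freqNorm_sub_le b m (m - l)
          rw [sub_sub_cancel, ← hc.2] at this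
          linarith
        have h3 := ENNReal.ofReal_le_ofReal (rpow_res (σ := σ) hγ ht hr h2)
        rw [ENNReal.ofReal_mul (by positivity), ENNReal.ofReal_mul (by positivity),
          ENNReal.ofReal_mul (by positivity)] at h3
        calc _ = ENNReal.ofReal (freqNorm b (m - l) ^ (σ - 1)) * ENNReal.ofReal (freqNorm b (m - l))
              * ((‖pairC A (m - l)‖₊ : ℝ≥0∞) * (‖u l‖₊ : ℝ≥0∞)) := by ring
          _ ≤ _ := mul_le_mul' h3 le_rfl
          _ = _ := by ring
    · rw [if_neg hc, mul_zero]; exact zero_le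
  refine step1.trans ?_
  rw [ltwo_const_mul, mul_assoc]
  gcongr
  refine (ltwo_tsum (fun l m => G l (m - l))).trans ?_
  have step2 : ∀ l, ltwo (fun m => G l (m - l)) =
      (if l = 0 then (‖u 0‖₊ : ℝ≥0∞) * ltwo (H σ) else 0) +
        ENNReal.ofReal (2 ^ γ) * (ltwo (H (σ + γ)) * w l) := by
    intro l
    rw [ltwo_shift (G l) l]
    by_cases hl : l = 0
    · have : G l = fun k => (‖u 0‖₊ : ℝ≥0∞) * H σ k := by
        ext k; rw [hG]; beta_reduce; rw [if_pos hl]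
      rw [this, ltwo_const_mul, if_pos hl, hw]; beta_reduce; rw [if_pos hl]; simp
    · have : G l = fun k => ENNReal.ofReal (2 ^ γ) * w l * H (σ + γ) k := by
        ext k; rw [hG]; beta_reduce; rw [if_neg hl]
      rw [this, ltwo_const_mul, if_neg hl]; ring
  simp only [step2]
  rw [ENNReal.tsum_add, tsum_ite_eq, ENNReal.tsum_mul_left, ENNReal.tsum_mul_left]
  set X := (‖u 0‖₊ : ℝ≥0∞) * ltwo (H σ)
  set Y := ltwo (H (σ + γ)) * ∑' l, w l
  calc X + ENNReal.ofReal (2 ^ γ) * Y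
      ≤ (X + ENNReal.ofReal (2 ^ γ) * Y) + (Y + ENNReal.ofReal (2 ^ γ) * X) := le_self_add
    _ = _ := by ring


/-- (Estimates for the resonant limit operators.) -/
theorem stmt_16
    {d : ℕ} (hd : 2 ≤ d) (b : Fin d → ℝ) (hb : ∀ i, 0 < b i)
    (φ : ℝ → ℝ) (hφ : GoodBump φ) (κ : ℝ) :
    (∀ σ γ : ℝ, 0 ≤ σ → 0 ≤ γ →
      ∃ C : ℝ≥0∞, C < ⊤ ∧
        ∀ (u : VF d) (A : PairF d),
          (∀ k, divC b u k = 0) → memKerLp b A →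
          hsN b (σ - 1) (pairC (Q1res b u A)) ≤
            C * (hsN b (σ + γ) (pairC A) *
                (∑' k : Lat d, if k = 0 then 0
                  else ENNReal.ofReal (freqNorm b k ^ (-γ)) * (‖u k‖₊ : ℝ≥0∞))
              + (‖u 0‖₊ : ℝ≥0∞) * hsN b σ (pairC A))) ∧
    (∀ σ : ℝ, 1/2 < σ → σ < 3/2 →
      ∃ C : ℝ≥0∞, C < ⊤ ∧
        ∀ A B : PairF d, memKerLp b A → memKerLp b B →
          hsN b (σ - 2) (pairC (Q2res b κ A B)) ≤
            C * min (besovN φ b (1/2) 1 (pairC A) * besovN φ b (σ - 1) 1 (pairC B))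
                    (besovN φ b (1/2) 1 (pairC B) * besovN φ b (σ - 1) 1 (pairC A))) ∧
    (∀ σ : ℝ, 3/2 ≤ σ →
      ∃ C : ℝ≥0∞, C < ⊤ ∧
        ∀ A B : PairF d, memKerLp b A → memKerLp b B →
          hsN b (σ - 2) (pairC (Q2res b κ A B)) ≤
            C * besovN φ b (σ - 1) 1 (pairC A) * besovN φ b (σ - 1) 1 (pairC B)) ∧
    (∀ σ : ℝ, -(1/2) < σ →
      ∃ C : ℝ≥0∞, C < ⊤ ∧
        ∀ A : PairF d, memKerLp b A →
          besovN φ b (σ - 1) 1 (pairC (Q2res b κ A A)) ≤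
            C * besovN φ b (1/2) 1 (pairC A) * besovN φ b σ 1 (pairC A)) := by
  refine ⟨fun σ γ _ hγ => ?_, fun σ h1 h2 => ?_, fun σ h1 => ?_, fun σ h1 => ?_⟩
  · obtain ⟨C, hC, h⟩ := Q1_hs b hb σ γ hγ
    exact ⟨C, hC, fun u A _ _ => h u A⟩
  · obtain ⟨C1, hC1, h3⟩ := Q2_besov hφ b hb κ (σ - 1) (by linarith)
    obtain ⟨C2, hC2, h4⟩ := hs_le_besov (E := ℂ × (Fin d → ℂ)) hφ b hb (σ - 1 - 1)
    refine ⟨C2 * C1, by finiteness, fun A B _ _ => ?_⟩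
    have e : σ - 2 = σ - 1 - 1 := by ring
    rw [e]
    refine (h4 _ (Q2_zero b κ A B)).trans ?_
    rw [mul_assoc]
    refine mul_le_mul' le_rfl ((h3 A B).trans (mul_le_mul' le_rfl (le_min ?_ ?_)))
    · refine (dsum_le _ (fun i => (2:ℝ≥0∞) ^ ((i:ℝ) * (1/2))) (fun j => 2 ^ ((j:ℝ) * (σ - 1)))
        _ _ 1 ?_).trans ?_
      · intro i j _ _
        rw [one_mul, ← two_rpow_add]
        refine two_rpow_mono (max_min_cases i j (fun x y => x * (σ - 1) + y * (1/2) ≤ _) ?_ ?_)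
        · intro _; linarith
        · intro h; nlinarith
      · rw [one_mul]
        exact mul_le_mul' (sum_le_besov φ b _ _) (sum_le_besov φ b _ _)
    · refine (dsum_le _ (fun i => (2:ℝ≥0∞) ^ ((i:ℝ) * (σ - 1))) (fun j => 2 ^ ((j:ℝ) * (1/2)))
        _ _ 1 ?_).trans ?_
      · intro i j _ _
        rw [one_mul, ← two_rpow_add]
        refine two_rpow_mono (max_min_cases i j (fun x y => x * (σ - 1) + y * (1/2) ≤ _) ?_ ?_)
        · intro h; nlinarith
        · intro _; linarith
      · rw [one_mul, mul_comm (besovN φ b (1/2) 1 _)]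
        exact mul_le_mul' (sum_le_besov φ b _ _) (sum_le_besov φ b _ _)
  · obtain ⟨C1, hC1, h3⟩ := Q2_besov hφ b hb κ (σ - 1) (by linarith)
    obtain ⟨C2, hC2, h4⟩ := hs_le_besov (E := ℂ × (Fin d → ℂ)) hφ b hb (σ - 1 - 1)
    obtain ⟨J, hJ, h5⟩ := blk_lower hφ b hb
    have hK := two_rpow_lt_top (J * (σ - 3/2))
    refine ⟨C2 * C1 * 2 ^ (J * (σ - 3/2)), ENNReal.mul_lt_top (by finiteness) hK,
      fun A B _ _ => ?_⟩
    have e : σ - 2 = σ - 1 - 1 := by ring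
    rw [e]
    refine (h4 _ (Q2_zero b κ A B)).trans ?_
    simp only [mul_assoc]
    refine mul_le_mul' le_rfl ((h3 A B).trans (mul_le_mul' le_rfl ?_))
    refine (dsum_le _ (fun i => (2:ℝ≥0∞) ^ ((i:ℝ) * (σ - 1))) (fun j => 2 ^ ((j:ℝ) * (σ - 1)))
        _ _ (2 ^ (J * (σ - 3/2))) ?_).trans ?_
    · intro i j hi hj
      have hi' := h5 A i hi
      have hj' := h5 B j hj
      rw [← two_rpow_add, ← two_rpow_add]
      refine two_rpow_mono (max_min_cases i j (fun x y => x * (σ - 1) + y * (1/2) ≤ _) ?_ ?_)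
      · intro h; nlinarith
      · intro h; nlinarith
    · exact mul_le_mul' le_rfl (mul_le_mul' (sum_le_besov φ b _ _) (sum_le_besov φ b _ _))
  · obtain ⟨C1, hC1, h3⟩ := Q2_besov hφ b hb κ σ h1
    refine ⟨C1 * 2, by finiteness, fun A _ => (h3 A A).trans ?_⟩
    simp only [mul_assoc]
    refine mul_le_mul' le_rfl ?_
    rw [two_mul]
    set a : ℤ → ℝ≥0∞ := fun i => ltwo (fun k => (‖blockOp φ b i (pairC A) k‖₊ : ℝ≥0∞)) with ha
    have k1 := dsum_le (fun i j => (2:ℝ≥0∞) ^ ((i:ℝ) * (1/2)) * 2 ^ ((j:ℝ) * σ))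
      (fun i => (2:ℝ≥0∞) ^ ((i:ℝ) * (1/2))) (fun j => 2 ^ ((j:ℝ) * σ)) a a 1
      (fun i j _ _ => by rw [one_mul])
    have k2 := dsum_le (fun i j => (2:ℝ≥0∞) ^ ((i:ℝ) * σ) * 2 ^ ((j:ℝ) * (1/2)))
      (fun i => (2:ℝ≥0∞) ^ ((i:ℝ) * σ)) (fun j => 2 ^ ((j:ℝ) * (1/2))) a a 1
      (fun i j _ _ => by rw [one_mul])
    rw [one_mul] at k1 k2
    have s1 : (∑' i : ℤ, (2:ℝ≥0∞) ^ ((i:ℝ) * (1/2)) * a i) ≤ besovN φ b (1/2) 1 (pairC A) :=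
      sum_le_besov φ b _ _
    have s2 : (∑' i : ℤ, (2:ℝ≥0∞) ^ ((i:ℝ) * σ) * a i) ≤ besovN φ b σ 1 (pairC A) :=
      sum_le_besov φ b _ _
    refine le_trans ?_ (add_le_add (k1.trans (mul_le_mul' s1 s2))
      ((k2.trans (mul_le_mul' s2 s1)).trans (le_of_eq (mul_comm _ _))))
    rw [← ENNReal.tsum_add]
    refine ENNReal.tsum_le_tsum fun i => ?_
    rw [← ENNReal.tsum_add]
    refine ENNReal.tsum_le_tsum fun j => ?_
    rw [← add_mul]
    refine mul_le_mul' ?_ le_rfl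
    rcases le_total i j with h | h
    · rw [max_eq_right h, min_eq_left h, add_comm ((j:ℝ) * σ), two_rpow_add]
      exact le_self_add
    · rw [max_eq_left h, min_eq_right h, two_rpow_add]
      exact le_add_self

end LowMach
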